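/- Let n ≥ 2 and let f₁, f₂ ∈ Q₀ⁿ. Assume that for every unit vector θ ∈ ℝⁿ one has ‖P_{θ⊥} f₁‖_{L¹(θ⊥)} ≤ ‖P_{θ⊥} f₂‖_{L¹(θ⊥)}, where θ⊥ is the hyperplane orthogonal to θ. Then ‖f₁‖_{n/(n−1)} ≤ 8·√n · ‖f₂‖_∞^{1/n} · ‖f₂‖₁^{(n−1)/n}. -/

import Mathlib

open MeasureTheory

noncomputable section

/-- `ℝⁿ` with its Euclidean structure. -/
abbrev Eucl (n : ℕ) := EuclideanSpace ℝ (Fin n)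

/-- `f : ℝⁿ → [0,∞)` is log-concave:
`f(tx+(1−t)y) ≥ f(x)^t · f(y)^(1−t)` for all `x, y` and `t ∈ (0,1)`. -/
def IsLogConcave {n : ℕ} (f : Eucl n → ℝ) : Prop :=
  ∀ x y : Eucl n, ∀ t : ℝ, 0 < t → t < 1 →
    f x ^ t * f y ^ (1 - t) ≤ f (t • x + (1 - t) • y)

/-- The class `Q₀ⁿ`: nonnegative, log-concave, upper semicontinuous, integrable
functions with positive integral. -/
def MemQ0 {n : ℕ} (f : Eucl n → ℝ) : Prop :=
  (∀ x, 0 ≤ f x) ∧ IsLogConcave f ∧ UpperSemicontinuous f ∧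
    Integrable f ∧ 0 < ∫ x, f x

/-- `‖f‖_∞ = sup f`. -/
def supNorm {n : ℕ} (f : Eucl n → ℝ) : ℝ := ⨆ x, f x

/-- `‖f‖_p = (∫ f^p)^(1/p)`. -/
def lpNorm {n : ℕ} (p : ℝ) (f : Eucl n → ℝ) : ℝ := (∫ x, f x ^ p) ^ (1 / p)

/-- `‖P_H f‖_{L¹(H)} = ∫_H sup_{z ∈ H⊥} f(y+z) dλ_H(y)`, the `L¹(H)`-norm of the
projection of `f` onto the subspace `H` (with the Lebesgue measure on `H` induced
by the Euclidean structure). -/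
def projL1 {n : ℕ} (f : Eucl n → ℝ) (H : Submodule ℝ (Eucl n)) : ℝ :=
  ∫ y : H, ⨆ z : Hᗮ, f ((y : Eucl n) + (z : Eucl n))

/-- `‖S_H f‖_{L¹(H)} = ∫_H f dλ_H`, the integral of the section `f|_H`. -/
def sectL1 {n : ℕ} (f : Eucl n → ℝ) (H : Submodule ℝ (Eucl n)) : ℝ :=
  ∫ y : H, f (y : Eucl n)

/-!
Put `I = ∫ f₂` and `S = sup f₂`. By Prékopa–Leindler the covariogram
`g x = ∫ min (f₂ y) (f₂ (y + x))` is log-concave; it is largest at the origin, where it equals `I`,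
and `∫ g ≥ I² / S`. With `Rⁿ = n!`, log-concavity compares `g` with `I exp (-r)` along rays, so that
the superlevel set `A = {g ≥ exp (-R) I}` has volume at least `I / (2 S)`.

The integral of the projection of `f₂` along `v`, extended homogeneously in `v`, is the one-sided
rate of decrease of `g` at the origin in the direction `v`, hence at most `R I` for every `v ∈ A`.

If `v₁, …, vₙ` are independent and uniform on `A`, the expectation of `det (v₁, …, vₙ)²` is `n!`
times the determinant of the second moment matrix of `A`, which is at least
`(volume A)² / (2 π e)ⁿ` because Gaussians maximise entropy. Some `v₁, …, vₙ ∈ A` therefore span a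
large parallelepiped `P`.

Finally, the Loomis–Whitney inequality for `f₁` in the basis `v₁, …, vₙ` bounds
`(∫ f₁ ^ (n / (n - 1))) ^ (n - 1) * volume P` by the product of the projection integrals of `f₁`,
hence of those of `f₂`, hence by `(R I)ⁿ = n! Iⁿ`.
-/

section

open Set Filter Topology Module
open scoped ENNReal NNReal Pointwise

section PrekopaLeindler

theorem volume_add_volume_le_volume_add_of_isCompact {K L : Set ℝ} (hK : IsCompact K)
    (hL : IsCompact L) (hK₀ : K.Nonempty) (hL₀ : L.Nonempty) :
    volume K + volume L ≤ volume (K + L) := by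
  obtain ⟨a, haK, ha⟩ := hK.exists_isGreatest hK₀
  obtain ⟨b, hbL, hb⟩ := hL.exists_isLeast hL₀
  -- The translates `b + K` and `a + L` of `K + L` only meet at `a + b`.
  have hinter : volume ((b +ᵥ K) ∩ (a +ᵥ L)) = 0 := by
    refine measure_mono_null (t := {a + b}) ?_ (by simp)
    rintro _ ⟨⟨x, hx, rfl⟩, ⟨y, hy, hxy⟩⟩
    have := ha hx
    have := hb hy
    simp only [vadd_eq_add, mem_singleton_iff] at hxy ⊢
    linarith
  calc volume K + volume L = volume (b +ᵥ K) + volume (a +ᵥ L) := by simp only [measure_vadd]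
    _ = volume ((b +ᵥ K) ∪ (a +ᵥ L)) := by
      rw [← measure_union_add_inter _ (hL.measurableSet.const_vadd a), hinter, add_zero]
    _ ≤ volume (K + L) := by
      refine measure_mono (union_subset ?_ ?_)
      · rintro _ ⟨x, hx, rfl⟩
        exact ⟨x, hx, b, hbL, add_comm x b⟩
      · rintro _ ⟨y, hy, rfl⟩
        exact ⟨a, haK, y, hy, rfl⟩

theorem volume_add_volume_le_volume_add {A B : Set ℝ} (hA : MeasurableSet A)
    (hB : MeasurableSet B) (hA₀ : A.Nonempty) (hB₀ : B.Nonempty) :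
    volume A + volume B ≤ volume (A + B) := by
  obtain ⟨a, ha⟩ := hA₀
  obtain ⟨b, hb⟩ := hB₀
  have hcompact : ∀ K ⊆ A, IsCompact K → ∀ L ⊆ B, IsCompact L →
      volume K + volume L ≤ volume (A + B) := fun K hKA hK L hLB hL ↦
    calc volume K + volume L ≤ volume (insert a K) + volume (insert b L) := by
          gcongr <;> exact subset_insert _ _
      _ ≤ volume (insert a K + insert b L) :=
          volume_add_volume_le_volume_add_of_isCompact (hK.insert a) (hL.insert b)
            (insert_nonempty _ _) (insert_nonempty _ _)
      _ ≤ volume (A + B) :=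
          measure_mono (add_subset_add (insert_subset ha hKA) (insert_subset hb hLB))
  rw [hA.measure_eq_iSup_isCompact, hB.measure_eq_iSup_isCompact]
  simp only [iSup_and']
  exact ENNReal.biSup_add_biSup_le' ⟨∅, empty_subset _, isCompact_empty⟩
    ⟨∅, empty_subset _, isCompact_empty⟩ fun K hK L hL ↦ hcompact K hK.1 hK.2 L hL.1 hL.2

theorem lintegral_eq_lintegral_meas_ofReal_lt {α : Type*} [MeasurableSpace α] (μ : Measure α)
    {f : α → ℝ≥0∞} (hf : Measurable f) (hf' : ∀ x, f x ≠ ∞) :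
    ∫⁻ x, f x ∂μ = ∫⁻ c in Ioi (0 : ℝ), μ {x | ENNReal.ofReal c < f x} := by
  calc ∫⁻ x, f x ∂μ = ∫⁻ x, ENNReal.ofReal (f x).toReal ∂μ := by
        simp only [ENNReal.ofReal_toReal (hf' _)]
    _ = ∫⁻ c in Ioi (0 : ℝ), μ {x | c < (f x).toReal} :=
        lintegral_eq_lintegral_meas_lt μ (ae_of_all _ fun _ ↦ ENNReal.toReal_nonneg)
          hf.ennreal_toReal.aemeasurable
    _ = ∫⁻ c in Ioi (0 : ℝ), μ {x | ENNReal.ofReal c < f x} :=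
        setLIntegral_congr_fun measurableSet_Ioi fun c hc ↦ by
          simp only [ENNReal.ofReal_lt_iff_lt_toReal (mem_Ioi.1 hc).le (hf' _)]

theorem measurable_meas_ofReal_lt {α : Type*} [MeasurableSpace α] (μ : Measure α)
    (f : α → ℝ≥0∞) : Measurable fun c : ℝ ↦ μ {x | ENNReal.ofReal c < f x} :=
  Antitone.measurable fun _ _ hcd ↦
    measure_mono fun _ hx ↦ (ENNReal.ofReal_le_ofReal hcd).trans_lt hx

variable {t : ℝ}

theorem rpow_mul_rpow_le_ofReal_mul_add_ofReal_mul (ht : t ∈ Ioo 0 1) (a b : ℝ≥0∞) :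
    a ^ (1 - t) * b ^ t ≤ ENNReal.ofReal (1 - t) * a + ENNReal.ofReal t * b := by
  have ht' : 0 < 1 - t := sub_pos.2 ht.2
  rcases eq_or_ne a ∞ with rfl | ha
  · rw [ENNReal.mul_top (by simpa using ht.2)]; simp
  rcases eq_or_ne b ∞ with rfl | hb
  · rw [ENNReal.mul_top (by simpa using ht.1)]; simp
  lift a to ℝ≥0 using ha
  lift b to ℝ≥0 using hb
  rw [← ENNReal.coe_rpow_of_nonneg _ ht'.le, ← ENNReal.coe_rpow_of_nonneg _ ht.1.le,
    ENNReal.ofReal_eq_coe_nnreal ht'.le, ENNReal.ofReal_eq_coe_nnreal ht.1.le]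
  exact_mod_cast NNReal.geom_mean_le_arith_mean2_weighted ⟨1 - t, ht'.le⟩ ⟨t, ht.1.le⟩ a b
    (NNReal.eq (sub_add_cancel 1 t))

theorem rpow_one_sub_mul_rpow (ht : t ∈ Ioo 0 1) (a : ℝ≥0∞) : a ^ (1 - t) * a ^ t = a := by
  rw [← ENNReal.rpow_add_of_nonneg _ _ (sub_pos.2 ht.2).le ht.1.le, sub_add_cancel,
    ENNReal.rpow_one]

theorem mul_rpow_one_sub_mul_mul_rpow (ht : t ∈ Ioo 0 1) (a b c d : ℝ≥0∞) :
    (a * b) ^ (1 - t) * (c * d) ^ t = a ^ (1 - t) * c ^ t * (b ^ (1 - t) * d ^ t) := by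
  rw [ENNReal.mul_rpow_of_nonneg _ _ (sub_pos.2 ht.2).le, ENNReal.mul_rpow_of_nonneg _ _ ht.1.le,
    mul_mul_mul_comm]

section Real

variable {f g h : ℝ → ℝ≥0∞}

theorem volume_lt_add_le_of_rpow_mul_rpow_le (ht : t ∈ Ioo 0 1) (hf : Measurable f)
    (hg : Measurable g) (H : ∀ x y, f x ^ (1 - t) * g y ^ t ≤ h ((1 - t) • x + t • y))
    {c : ℝ≥0∞} (hcf : ∃ x, c < f x) (hcg : ∃ x, c < g x) :
    ENNReal.ofReal (1 - t) * volume {x | c < f x} + ENNReal.ofReal t * volume {x | c < g x} ≤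
      volume {x | c < h x} := by
  have ht' : 0 < 1 - t := sub_pos.2 ht.2
  have hsmul {r : ℝ} (hr : 0 < r) (A : Set ℝ) : ENNReal.ofReal r * volume A = volume (r • A) := by
    rw [Measure.addHaar_smul_of_nonneg _ hr.le, Module.finrank_self, pow_one]
  rw [hsmul ht', hsmul ht.1]
  refine (volume_add_volume_le_volume_add ((measurableSet_lt measurable_const hf).const_smul₀ _)
    ((measurableSet_lt measurable_const hg).const_smul₀ _) (Nonempty.smul_set hcf)
    (Nonempty.smul_set hcg)).trans (measure_mono ?_)
  rintro _ ⟨_, ⟨x, hx, rfl⟩, _, ⟨y, hy, rfl⟩, rfl⟩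
  calc c = c ^ (1 - t) * c ^ t := (rpow_one_sub_mul_rpow ht c).symm
    _ < f x ^ (1 - t) * g y ^ t :=
      ENNReal.mul_lt_mul (ENNReal.rpow_lt_rpow hx ht') (ENNReal.rpow_lt_rpow hy ht.1)
    _ ≤ h ((1 - t) • x + t • y) := H x y

theorem lintegral_add_lintegral_le_of_iSup_eq_one (ht : t ∈ Ioo 0 1) (hf : Measurable f)
    (hg : Measurable g) (hh : Measurable h) (hf₁ : ⨆ x, f x = 1) (hg₁ : ⨆ x, g x = 1)
    (H : ∀ x y, f x ^ (1 - t) * g y ^ t ≤ h ((1 - t) • x + t • y)) :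
    ENNReal.ofReal (1 - t) * (∫⁻ x, f x) + ENNReal.ofReal t * (∫⁻ x, g x) ≤ ∫⁻ x, h x := by
  have hf_le (x) : f x ≤ 1 := hf₁ ▸ le_iSup f x
  have hg_le (x) : g x ≤ 1 := hg₁ ▸ le_iSup g x
  have hne {u : ℝ → ℝ≥0∞} (hu : ∀ x, u x ≤ 1) (x) : u x ≠ ∞ :=
    ((hu x).trans_lt ENNReal.one_lt_top).ne
  refine le_trans ?_ (lintegral_mono fun x ↦ min_le_left (h x) 1)
  rw [lintegral_eq_lintegral_meas_ofReal_lt _ hf (hne hf_le),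
    lintegral_eq_lintegral_meas_ofReal_lt _ hg (hne hg_le),
    lintegral_eq_lintegral_meas_ofReal_lt _ (hh.min measurable_const)
      (hne fun x ↦ min_le_right _ _),
    ← lintegral_const_mul _ (measurable_meas_ofReal_lt _ _),
    ← lintegral_const_mul _ (measurable_meas_ofReal_lt _ _),
    ← lintegral_add_left ((measurable_meas_ofReal_lt _ _).const_mul _)]
  refine lintegral_mono fun c ↦ ?_
  rcases lt_or_ge (ENNReal.ofReal c) 1 with hc | hc
  · have hcf : ∃ x, ENNReal.ofReal c < f x := lt_iSup_iff.1 (hf₁ ▸ hc)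
    have hcg : ∃ x, ENNReal.ofReal c < g x := lt_iSup_iff.1 (hg₁ ▸ hc)
    simpa only [lt_min_iff, hc, and_true] using
      volume_lt_add_le_of_rpow_mul_rpow_le ht hf hg H hcf hcg
  · simp only [((hf_le _).trans hc).not_gt, ((hg_le _).trans hc).not_gt, ofPred_false,
      measure_empty, mul_zero, add_zero, zero_le]

theorem lintegral_rpow_mul_lintegral_rpow_le_of_bounded (ht : t ∈ Ioo 0 1) (hf : Measurable f)
    (hg : Measurable g) (hh : Measurable h) (hf₁ : ⨆ x, f x ≠ ∞) (hg₁ : ⨆ x, g x ≠ ∞)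
    (H : ∀ x y, f x ^ (1 - t) * g y ^ t ≤ h ((1 - t) • x + t • y)) :
    (∫⁻ x, f x) ^ (1 - t) * (∫⁻ x, g x) ^ t ≤ ∫⁻ x, h x := by
  have ht' : 0 < 1 - t := sub_pos.2 ht.2
  set a := ⨆ x, f x with ha
  set b := ⨆ x, g x with hb
  rcases eq_or_ne a 0 with ha₀ | ha₀
  · simp [ENNReal.iSup_eq_zero.1 (ha.symm.trans ha₀), ht']
  rcases eq_or_ne b 0 with hb₀ | hb₀
  · simp [ENNReal.iSup_eq_zero.1 (hb.symm.trans hb₀), ht.1]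
  have hc₀ : a⁻¹ ^ (1 - t) * b⁻¹ ^ t ≠ 0 := by
    simp [ENNReal.rpow_eq_zero_iff, hf₁, ha₀, hg₁, hb₀, ht.1, ht.2]
  have hc₁ : a⁻¹ ^ (1 - t) * b⁻¹ ^ t ≠ ∞ :=
    ENNReal.mul_ne_top (ENNReal.rpow_ne_top_of_nonneg ht'.le (by simpa using ha₀))
      (ENNReal.rpow_ne_top_of_nonneg ht.1.le (by simpa using hb₀))
  rw [← ENNReal.mul_le_mul_iff_right hc₀ hc₁]
  calc a⁻¹ ^ (1 - t) * b⁻¹ ^ t * ((∫⁻ x, f x) ^ (1 - t) * (∫⁻ x, g x) ^ t)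
      = (∫⁻ x, a⁻¹ * f x) ^ (1 - t) * (∫⁻ x, b⁻¹ * g x) ^ t := by
        rw [lintegral_const_mul _ hf, lintegral_const_mul _ hg, mul_rpow_one_sub_mul_mul_rpow ht]
    _ ≤ ENNReal.ofReal (1 - t) * (∫⁻ x, a⁻¹ * f x) + ENNReal.ofReal t * (∫⁻ x, b⁻¹ * g x) :=
        rpow_mul_rpow_le_ofReal_mul_add_ofReal_mul ht _ _
    _ ≤ ∫⁻ x, a⁻¹ ^ (1 - t) * b⁻¹ ^ t * h x := by
        refine lintegral_add_lintegral_le_of_iSup_eq_one ht (hf.const_mul _) (hg.const_mul _)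
          (hh.const_mul _) ?_ ?_ fun x y ↦ ?_
        · rw [← ENNReal.mul_iSup, ENNReal.inv_mul_cancel ha₀ hf₁]
        · rw [← ENNReal.mul_iSup, ENNReal.inv_mul_cancel hb₀ hg₁]
        · rw [mul_rpow_one_sub_mul_mul_rpow ht]
          gcongr
          exact H x y
    _ = a⁻¹ ^ (1 - t) * b⁻¹ ^ t * ∫⁻ x, h x := lintegral_const_mul _ hh

end Real

theorem lintegral_rpow_eq_iSup_lintegral_min_rpow {α : Type*} [MeasurableSpace α]
    (μ : Measure α) {f : α → ℝ≥0∞} (hf : Measurable f) {r : ℝ} (hr : 0 < r) :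
    (∫⁻ x, f x ∂μ) ^ r = ⨆ N : ℕ, (∫⁻ x, min (f x) N ∂μ) ^ r := by
  have hmono : Monotone fun (N : ℕ) x ↦ min (f x) (N : ℝ≥0∞) := fun _ _ hNM _ ↦
    min_le_min_left _ (by exact_mod_cast hNM)
  refine Eq.trans ?_ ((ENNReal.orderIsoRpow r hr).map_iSup _)
  rw [← lintegral_iSup (fun N ↦ hf.min measurable_const) hmono]
  simp only [← inf_iSup_eq, ENNReal.iSup_natCast, inf_top_eq, ENNReal.orderIsoRpow_apply]

/-- The functional form of the Brunn–Minkowski inequality, in its multiplicative (Prékopa–Leindler)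
version, as a property of a measure on a real vector space. -/
def SatisfiesPrekopaLeindler {E : Type*} [AddCommGroup E] [Module ℝ E] [MeasurableSpace E]
    (μ : Measure E) : Prop :=
  ∀ ⦃f g h : E → ℝ≥0∞⦄, Measurable f → Measurable g → Measurable h → ∀ ⦃t : ℝ⦄, t ∈ Ioo 0 1 →
    (∀ x y, f x ^ (1 - t) * g y ^ t ≤ h ((1 - t) • x + t • y)) →
    (∫⁻ x, f x ∂μ) ^ (1 - t) * (∫⁻ x, g x ∂μ) ^ t ≤ ∫⁻ x, h x ∂μ

theorem satisfiesPrekopaLeindler_volume_real :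
    SatisfiesPrekopaLeindler (volume : Measure ℝ) := by
  intro f g h hf hg hh t ht H
  rw [lintegral_rpow_eq_iSup_lintegral_min_rpow _ hf (sub_pos.2 ht.2),
    lintegral_rpow_eq_iSup_lintegral_min_rpow _ hg ht.1]
  have hmin (u : ℝ → ℝ≥0∞) (N : ℕ) : ⨆ x, min (u x) (N : ℝ≥0∞) ≠ ∞ :=
    ne_top_of_le_ne_top (ENNReal.natCast_ne_top N) (iSup_le fun _ ↦ min_le_right _ _)
  simp only [ENNReal.iSup_mul, ENNReal.mul_iSup]
  refine iSup₂_le fun M N ↦ ?_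
  refine lintegral_rpow_mul_lintegral_rpow_le_of_bounded ht (hf.min measurable_const)
    (hg.min measurable_const) hh (hmin f N) (hmin g M) fun x y ↦ le_trans ?_ (H x y)
  have := sub_pos.2 ht.2
  have := ht.1
  gcongr <;> exact min_le_left _ _

namespace SatisfiesPrekopaLeindler

section Module

variable {E F : Type*} [AddCommGroup E] [Module ℝ E] [MeasurableSpace E]
  [AddCommGroup F] [Module ℝ F] [MeasurableSpace F] {μ : Measure E} {ν : Measure F}

theorem of_subsingleton [Subsingleton E] (μ : Measure E) : SatisfiesPrekopaLeindler μ := by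
  intro f g h _ _ _ t ht H
  have hint (u : E → ℝ≥0∞) : ∫⁻ x, u x ∂μ = u 0 * μ univ := by
    rw [← lintegral_const]
    exact lintegral_congr fun x ↦ by rw [Subsingleton.elim x 0]
  rw [hint, hint, hint, mul_rpow_one_sub_mul_mul_rpow ht, rpow_one_sub_mul_rpow ht]
  gcongr
  simpa using H 0 0

theorem const_smul (hμ : SatisfiesPrekopaLeindler μ) (c : ℝ≥0∞) :
    SatisfiesPrekopaLeindler (c • μ) := by
  intro f g h hf hg hh t ht H
  simp only [lintegral_smul_measure, smul_eq_mul]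
  rw [mul_rpow_one_sub_mul_mul_rpow ht, rpow_one_sub_mul_rpow ht]
  gcongr
  exact hμ hf hg hh ht H

theorem map (hμ : SatisfiesPrekopaLeindler μ) {L : E →ₗ[ℝ] F} (hL : Measurable L) :
    SatisfiesPrekopaLeindler (μ.map L) := by
  intro f g h hf hg hh t ht H
  rw [lintegral_map hf hL, lintegral_map hg hL, lintegral_map hh hL]
  refine hμ (hf.comp hL) (hg.comp hL) (hh.comp hL) ht fun x y ↦ ?_
  simpa only [Function.comp_apply, map_add, map_smul] using H (L x) (L y)

theorem prod [SFinite ν] (hμ : SatisfiesPrekopaLeindler μ) (hν : SatisfiesPrekopaLeindler ν) :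
    SatisfiesPrekopaLeindler (μ.prod ν) := by
  intro f g h hf hg hh t ht H
  rw [lintegral_prod _ hf.aemeasurable, lintegral_prod _ hg.aemeasurable,
    lintegral_prod _ hh.aemeasurable]
  exact hμ hf.lintegral_prod_right' hg.lintegral_prod_right' hh.lintegral_prod_right' ht
    fun r s ↦ hν (hf.comp measurable_prodMk_left) (hg.comp measurable_prodMk_left)
      (hh.comp measurable_prodMk_left) ht fun x y ↦ H (r, x) (s, y)

end Module

variable {E F : Type*} [NormedAddCommGroup E] [NormedSpace ℝ E] [MeasurableSpace E] [BorelSpace E]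
  [NormedAddCommGroup F] [NormedSpace ℝ F] [MeasurableSpace F] [BorelSpace F]

theorem of_continuousLinearEquiv [LocallyCompactSpace F] [SecondCountableTopology F]
    {μ : Measure E} [μ.IsAddHaarMeasure] (hμ : SatisfiesPrekopaLeindler μ)
    (e : E ≃L[ℝ] F) (ν : Measure F) [ν.IsAddHaarMeasure] : SatisfiesPrekopaLeindler ν := by
  have : (μ.map e).IsAddHaarMeasure := e.isAddHaarMeasure_map μ
  rw [Measure.isAddLeftInvariant_eq_smul ν (μ.map e)]
  exact (hμ.map (L := e.toLinearEquiv.toLinearMap) e.continuous.measurable).const_smul _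

theorem volume_pi_fin : ∀ n : ℕ, SatisfiesPrekopaLeindler (volume : Measure (Fin n → ℝ))
  | 0 => of_subsingleton _
  | n + 1 =>
    (satisfiesPrekopaLeindler_volume_real.prod (volume_pi_fin n)).of_continuousLinearEquiv
      (ContinuousLinearEquiv.ofFinrankEq (by simp [add_comm])) volume

end SatisfiesPrekopaLeindler

theorem satisfiesPrekopaLeindler_of_isAddHaarMeasure {E : Type*} [NormedAddCommGroup E]
    [NormedSpace ℝ E] [FiniteDimensional ℝ E] [MeasurableSpace E] [BorelSpace E] (μ : Measure E)
    [μ.IsAddHaarMeasure] : SatisfiesPrekopaLeindler μ := by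
  have : ProperSpace E := FiniteDimensional.proper ℝ E
  exact (SatisfiesPrekopaLeindler.volume_pi_fin (Module.finrank ℝ E)).of_continuousLinearEquiv
    (ContinuousLinearEquiv.ofFinrankEq (by simp)) μ

end PrekopaLeindler

section LoomisWhitney

theorem removeNth_succ_insertNth_zero {α : Type*} {n : ℕ} (j : Fin (n + 1)) (s : α)
    (x : Fin (n + 1) → α) :
    j.succ.removeNth (Fin.insertNth 0 s x : Fin (n + 2) → α) =
      (Fin.insertNth 0 s (j.removeNth x) : Fin (n + 1) → α) := by
  simp only [Fin.insertNth_zero']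
  exact Fin.cons_comp_succ_succAbove ..

variable {α : Type*} [MeasurableSpace α] {n : ℕ}

theorem measurable_insertNth (i : Fin (n + 1)) :
    Measurable fun p : α × (Fin n → α) ↦ (i.insertNth p.1 p.2 : Fin (n + 1) → α) :=
  (MeasurableEquiv.piFinSuccAbove (fun _ ↦ α) i).symm.measurable

theorem measurable_removeNth (i : Fin (n + 1)) :
    Measurable fun x : Fin (n + 1) → α ↦ i.removeNth x :=
  measurable_pi_lambda _ fun _ ↦ measurable_pi_apply _

theorem measurable_prod_removeNth_rpow {u : Fin (n + 1) → (Fin n → α) → ℝ≥0∞}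
    (hu : ∀ i, Measurable (u i)) (r : ℝ) :
    Measurable fun x : Fin (n + 1) → α ↦ ∏ i, u i (i.removeNth x) ^ r :=
  Finset.measurable_prod _ fun i _ ↦ ((hu i).comp (measurable_removeNth i)).pow_const r

theorem lintegral_rpow_mul_prod_removeNth_rpow_le (μ : Measure α) (hn : 1 ≤ n)
    {v : (Fin (n + 1) → α) → ℝ≥0∞} {u : Fin (n + 1) → (Fin n → α) → ℝ≥0∞}
    (hv : Measurable v) (hu : ∀ i, Measurable (u i))
    (hLW : ∫⁻ x, ∏ i, u i (i.removeNth x) ^ (1 / n : ℝ) ∂Measure.pi (fun _ ↦ μ) ≤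
      ∏ i, (∫⁻ y, u i y ∂Measure.pi (fun _ ↦ μ)) ^ (1 / n : ℝ)) :
    ∫⁻ x, v x ^ (1 / (n + 1) : ℝ) *
        ∏ i, u i (i.removeNth x) ^ (1 / (n + 1) : ℝ) ∂Measure.pi (fun _ ↦ μ) ≤
      (∫⁻ x, v x ∂Measure.pi (fun _ ↦ μ)) ^ (1 / (n + 1) : ℝ) *
        ∏ i, (∫⁻ y, u i y ∂Measure.pi (fun _ ↦ μ)) ^ (1 / (n + 1) : ℝ) := by
  have : (0 : ℝ) < n := by exact_mod_cast hn
  have hq : (0 : ℝ) ≤ n / (n + 1) := by positivity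
  have hpow (a : Fin (n + 1) → ℝ≥0∞) :
      ∏ i, a i ^ (1 / (n + 1) : ℝ) = (∏ i, a i ^ (1 / n : ℝ)) ^ (n / (n + 1) : ℝ) := by
    rw [← ENNReal.prod_rpow_of_nonneg hq]
    refine Finset.prod_congr rfl fun i _ ↦ ?_
    rw [← ENNReal.rpow_mul]
    congr 1
    field_simp
  simp only [hpow]
  refine (ENNReal.lintegral_mul_norm_pow_le hv.aemeasurable
    (measurable_prod_removeNth_rpow hu _).aemeasurable (by positivity) hq
    (by field_simp; ring)).trans ?_
  gcongr

variable (μ : Measure α) [SigmaFinite μ]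

theorem lintegral_pi_eq_lintegral_insertNth (i : Fin (n + 1)) {u : (Fin (n + 1) → α) → ℝ≥0∞}
    (hu : Measurable u) :
    ∫⁻ x, u x ∂Measure.pi (fun _ ↦ μ) =
      ∫⁻ s, ∫⁻ y, u (i.insertNth s y) ∂Measure.pi (fun _ ↦ μ) ∂μ := by
  rw [← ((measurePreserving_piFinSuccAbove (fun _ ↦ μ) i).symm).lintegral_comp hu]
  exact lintegral_prod _ (hu.comp (measurable_insertNth i)).aemeasurable

theorem lintegral_prod_removeNth_fin_two (u : Fin 2 → (Fin 1 → α) → ℝ≥0∞)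
    (hu : ∀ i, Measurable (u i)) :
    ∫⁻ x, ∏ i, u i (i.removeNth x) ∂Measure.pi (fun _ ↦ μ) =
      ∏ i, ∫⁻ y, u i y ∂Measure.pi (fun _ ↦ μ) := by
  have hconst : Measurable fun (s : α) (_ : Fin 1) ↦ s :=
    measurable_pi_lambda _ fun _ ↦ measurable_id
  have hone (i) : ∫⁻ y, u i y ∂Measure.pi (fun _ ↦ μ) = ∫⁻ s, u i (fun _ ↦ s) ∂μ :=
    ((measurePreserving_funUnique μ (Fin 1)).symm.lintegral_comp (hu i)).symm
  have hremove (x : Fin 2 → α) : ∏ i, u i (i.removeNth x) =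
      u 1 (fun _ ↦ x 0) * u 0 (fun _ ↦ x 1) := by
    rw [Fin.prod_univ_two, mul_comm]
    congr 2 <;> ext j <;> rw [Subsingleton.elim j 0] <;> rfl
  simp only [hremove, hone, Fin.prod_univ_two]
  calc ∫⁻ x, u 1 (fun _ ↦ x 0) * u 0 (fun _ ↦ x 1) ∂Measure.pi (fun _ ↦ μ)
      = ∫⁻ p : α × α, u 1 (fun _ ↦ p.1) * u 0 (fun _ ↦ p.2) ∂μ.prod μ :=
        (measurePreserving_finTwoArrow μ).lintegral_comp
          (f := fun p : α × α ↦ u 1 (fun _ ↦ p.1) * u 0 (fun _ ↦ p.2))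
          (((hu 1).comp (hconst.comp measurable_fst)).mul
            ((hu 0).comp (hconst.comp measurable_snd)))
    _ = (∫⁻ s, u 1 (fun _ ↦ s) ∂μ) * ∫⁻ s, u 0 (fun _ ↦ s) ∂μ :=
        lintegral_prod_mul ((hu 1).comp hconst).aemeasurable ((hu 0).comp hconst).aemeasurable
    _ = (∫⁻ s, u 0 (fun _ ↦ s) ∂μ) * ∫⁻ s, u 1 (fun _ ↦ s) ∂μ := mul_comm _ _

theorem lintegral_prod_removeNth_rpow_le (hn : 1 ≤ n) (u : Fin (n + 1) → (Fin n → α) → ℝ≥0∞)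
    (hu : ∀ i, Measurable (u i)) :
    ∫⁻ x, ∏ i, u i (i.removeNth x) ^ (1 / n : ℝ) ∂Measure.pi (fun _ ↦ μ) ≤
      ∏ i, (∫⁻ y, u i y ∂Measure.pi (fun _ ↦ μ)) ^ (1 / n : ℝ) := by
  induction n, hn using Nat.le_induction with
  | base => simpa using (lintegral_prod_removeNth_fin_two μ u hu).le
  | succ n hn ih =>
    push_cast
    have hmeas (j : Fin (n + 1)) : Measurable fun p : α × (Fin n → α) ↦
        u j.succ (Fin.insertNth 0 p.1 p.2) := (hu j.succ).comp (measurable_insertNth 0)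
    set U : Fin (n + 1) → α → ℝ≥0∞ := fun j s ↦
      ∫⁻ y, u j.succ (Fin.insertNth 0 s y) ∂Measure.pi (fun _ ↦ μ)
    have hU (j) : Measurable (U j) := (hmeas j).lintegral_prod_right'
    rw [lintegral_pi_eq_lintegral_insertNth μ 0 (measurable_prod_removeNth_rpow hu _)]
    simp only [Fin.prod_univ_succ (n := n + 1), removeNth_succ_insertNth_zero,
      Fin.removeNth_insertNth]
    calc ∫⁻ s, ∫⁻ x, u 0 x ^ (1 / (n + 1) : ℝ) * ∏ j : Fin (n + 1),
            u j.succ (Fin.insertNth 0 s (j.removeNth x)) ^ (1 / (n + 1) : ℝ)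
            ∂Measure.pi (fun _ ↦ μ) ∂μ
        ≤ ∫⁻ s, (∫⁻ x, u 0 x ∂Measure.pi (fun _ ↦ μ)) ^ (1 / (n + 1) : ℝ) *
            ∏ j, U j s ^ (1 / (n + 1) : ℝ) ∂μ := lintegral_mono fun s ↦
          have hs (j) := (hmeas j).comp (measurable_prodMk_left (x := s))
          lintegral_rpow_mul_prod_removeNth_rpow_le μ hn (hu 0) hs (ih _ hs)
      _ = (∫⁻ x, u 0 x ∂Measure.pi (fun _ ↦ μ)) ^ (1 / (n + 1) : ℝ) *
            ∫⁻ s, ∏ j, U j s ^ (1 / (n + 1) : ℝ) ∂μ :=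
          lintegral_const_mul _ (Finset.measurable_prod _ fun j _ ↦ (hU j).pow_const _)
      _ ≤ (∫⁻ x, u 0 x ∂Measure.pi (fun _ ↦ μ)) ^ (1 / (n + 1) : ℝ) *
            ∏ j, (∫⁻ s, U j s ∂μ) ^ (1 / (n + 1) : ℝ) := by
          gcongr
          exact ENNReal.lintegral_prod_norm_pow_le Finset.univ (fun j _ ↦ (hU j).aemeasurable)
            (by simp; field_simp) fun _ _ ↦ by positivity
      _ = _ := by
          simp only [U, ← lintegral_pi_eq_lintegral_insertNth μ 0 (hu _)]

end LoomisWhitney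

section SecondMoment

open ProbabilityTheory Matrix
open scoped Nat

variable {ι : Type*} [Fintype ι]

/-- The matrix of second moments (about the origin) of a measure on `ι → ℝ`. -/
def secondMoment (μ : Measure (ι → ℝ)) : Matrix ι ι ℝ :=
  .of fun j k ↦ ∫ x, x j * x k ∂μ

theorem sq_dotProduct_eq_sum (w x : ι → ℝ) :
    (w ⬝ᵥ x) ^ 2 = ∑ j, ∑ k, w j * w k * (x j * x k) := by
  rw [sq, dotProduct, Finset.sum_mul_sum]
  exact Finset.sum_congr rfl fun j _ ↦ Finset.sum_congr rfl fun k _ ↦ mul_mul_mul_comm ..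

section Integrable

variable {μ : Measure (ι → ℝ)} (hμ : ∀ j k, Integrable (fun x ↦ x j * x k) μ)
include hμ

theorem integrable_sq_dotProduct (w : ι → ℝ) : Integrable (fun x ↦ (w ⬝ᵥ x) ^ 2) μ := by
  simp only [sq_dotProduct_eq_sum]
  exact integrable_finsetSum _ fun j _ ↦ integrable_finsetSum _ fun k _ ↦ (hμ j k).const_mul _

theorem integral_sq_dotProduct (w : ι → ℝ) :
    ∫ x, (w ⬝ᵥ x) ^ 2 ∂μ = w ⬝ᵥ secondMoment μ *ᵥ w := by
  have hint (j k) : Integrable (fun x : ι → ℝ ↦ w j * w k * (x j * x k)) μ := (hμ j k).const_mul _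
  simp only [sq_dotProduct_eq_sum]
  rw [integral_finsetSum _ fun j _ ↦ integrable_finsetSum _ fun k _ ↦ hint j k]
  simp only [integral_finsetSum _ fun k _ ↦ hint _ k, integral_const_mul, dotProduct, mulVec,
    secondMoment, of_apply, Finset.mul_sum]
  exact Finset.sum_congr rfl fun j _ ↦ Finset.sum_congr rfl fun k _ ↦ by ring

theorem integrable_sum_sq_mulVec {κ : Type*} [Fintype κ] (T : Matrix κ ι ℝ) :
    Integrable (fun x ↦ ∑ i, (T *ᵥ x) i ^ 2) μ :=
  integrable_finsetSum _ fun i _ ↦ integrable_sq_dotProduct hμ (T i)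

theorem integral_sum_sq_mulVec {κ : Type*} [Fintype κ] (T : Matrix κ ι ℝ) :
    ∫ x, ∑ i, (T *ᵥ x) i ^ 2 ∂μ = (T * secondMoment μ * Tᵀ).trace := by
  have hrow (x : ι → ℝ) (i : κ) : (T *ᵥ x) i = T i ⬝ᵥ x := rfl
  simp only [hrow]
  rw [integral_finsetSum _ fun i _ ↦ integrable_sq_dotProduct hμ (T i), Matrix.mul_assoc]
  exact Finset.sum_congr rfl fun i _ ↦ integral_sq_dotProduct hμ (T i)

theorem integrable_prod_mul_apply [SigmaFinite μ] (σ τ : ι → ι) :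
    Integrable (fun v : ι → ι → ℝ ↦ ∏ i, (v i (σ i) * v i (τ i))) (Measure.pi fun _ ↦ μ) :=
  Integrable.fintype_prod (f := fun i (x : ι → ℝ) ↦ x (σ i) * x (τ i)) fun _ ↦ hμ _ _

theorem secondMoment_posDef (hac : μ ≪ volume) (hμ₀ : μ ≠ 0) : (secondMoment μ).PosDef := by
  refine .of_dotProduct_mulVec_pos (by ext j k; simp [secondMoment, mul_comm]) fun w hw ↦ ?_
  rw [star_trivial, ← integral_sq_dotProduct hμ]
  refine (integral_nonneg fun x ↦ sq_nonneg _).lt_of_ne' fun hzero ↦ hμ₀ ?_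
  rw [integral_eq_zero_iff_of_nonneg (fun x ↦ sq_nonneg _) (integrable_sq_dotProduct hμ w)] at hzero
  let L : (ι → ℝ) →ₗ[ℝ] ℝ := dotProductBilin ℝ ℝ w
  have hker : L.ker ≠ ⊤ := fun h ↦ hw <| dotProduct_self_eq_zero.1 <|
    LinearMap.mem_ker.1 (h ▸ Submodule.mem_top : w ∈ L.ker)
  have hnull : ∀ᵐ x ∂μ, x ∉ (L.ker : Set (ι → ℝ)) :=
    measure_eq_zero_iff_ae_notMem.1 (hac (Measure.addHaar_submodule volume L.ker hker))
  rw [← ae_eq_bot, ← eventually_false_iff_eq_bot]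
  filter_upwards [hzero, hnull] with x hx hx'
  exact hx' (LinearMap.mem_ker.2 (pow_eq_zero_iff two_ne_zero |>.1 hx))

end Integrable

variable [DecidableEq ι]

section Determinant

theorem sq_det_eq_sum_perm (v : Matrix ι ι ℝ) :
    v.det ^ 2 = ∑ τ : Equiv.Perm ι, ∑ σ : Equiv.Perm ι,
      (τ.sign : ℝ) * (σ.sign * ∏ i, (v i (σ i) * v i (τ i))) := by
  have hdet : v.det = ∑ σ : Equiv.Perm ι, (σ.sign : ℝ) * ∏ i, v i (σ i) := by
    rw [← det_transpose, det_apply']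
    rfl
  rw [sq, hdet, Finset.sum_mul_sum, Finset.sum_comm]
  refine Finset.sum_congr rfl fun τ _ ↦ Finset.sum_congr rfl fun σ _ ↦ ?_
  rw [Finset.prod_mul_distrib]
  ring

theorem sum_perm_eq_factorial_mul_det (M : Matrix ι ι ℝ) :
    ∑ τ : Equiv.Perm ι, ∑ σ : Equiv.Perm ι,
      (τ.sign : ℝ) * (σ.sign * ∏ i, M (σ i) (τ i)) = (Fintype.card ι)! * M.det := by
  have hperm (τ : Equiv.Perm ι) :
      ∑ σ : Equiv.Perm ι, (τ.sign : ℝ) * (σ.sign * ∏ i, M (σ i) (τ i)) = M.det := by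
    have hsign : (τ.sign : ℝ) * τ.sign = 1 := by
      rw [← Int.cast_mul, ← Units.val_mul, Int.units_mul_self, Units.val_one, Int.cast_one]
    rw [← Finset.mul_sum, ← one_mul M.det, ← hsign, mul_assoc, ← det_permute' τ M, det_apply']
    rfl
  simp only [hperm, Finset.sum_const, Finset.card_univ, Fintype.card_perm, nsmul_eq_mul]

variable {μ : Measure (ι → ℝ)} [SigmaFinite μ]
  (hμ : ∀ j k, Integrable (fun x ↦ x j * x k) μ)
include hμ

theorem integrable_sq_det :
    Integrable (fun v : ι → ι → ℝ ↦ (of v).det ^ 2) (Measure.pi fun _ ↦ μ) := by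
  simp only [sq_det_eq_sum_perm, of_apply]
  exact integrable_finsetSum _ fun τ _ ↦ integrable_finsetSum _ fun σ _ ↦
    ((integrable_prod_mul_apply hμ σ τ).const_mul _).const_mul _

theorem integral_sq_det :
    ∫ v : ι → ι → ℝ, (of v).det ^ 2 ∂Measure.pi (fun _ ↦ μ) =
      (Fintype.card ι)! * (secondMoment μ).det := by
  have hint (σ τ : Equiv.Perm ι) := ((integrable_prod_mul_apply hμ σ τ).const_mul
    (σ.sign : ℝ)).const_mul (τ.sign : ℝ)
  simp only [sq_det_eq_sum_perm, of_apply]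
  rw [integral_finsetSum _ fun τ _ ↦ integrable_finsetSum _ fun σ _ ↦ hint σ τ,
    ← sum_perm_eq_factorial_mul_det]
  refine Finset.sum_congr rfl fun τ _ ↦ ?_
  rw [integral_finsetSum _ fun σ _ ↦ hint σ τ]
  refine Finset.sum_congr rfl fun σ _ ↦ ?_
  rw [integral_const_mul, integral_const_mul,
    integral_fintype_prod_eq_prod (f := fun i (x : ι → ℝ) ↦ x (σ i) * x (τ i))]
  rfl

end Determinant

section Gaussian

omit [DecidableEq ι] in
theorem exp_neg_sum_sq_div_two (y : ι → ℝ) :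
    Real.exp (-(∑ i, y i ^ 2) / 2) = ∏ i, Real.exp (-(1 / 2) * y i ^ 2) := by
  rw [← Real.exp_sum, ← Finset.mul_sum]
  ring_nf

omit [DecidableEq ι] in
theorem integrable_exp_neg_sum_sq :
    Integrable fun y : ι → ℝ ↦ Real.exp (-(∑ i, y i ^ 2) / 2) := by
  simp only [exp_neg_sum_sq_div_two]
  exact Integrable.fintype_prod (f := fun _ x ↦ Real.exp (-(1 / 2) * x ^ 2)) fun _ ↦
    integrable_exp_neg_mul_sq (by norm_num)

omit [DecidableEq ι] in
theorem integral_exp_neg_sum_sq :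
    ∫ y : ι → ℝ, Real.exp (-(∑ i, y i ^ 2) / 2) = √(2 * Real.pi) ^ Fintype.card ι := by
  simp only [exp_neg_sum_sq_div_two]
  rw [integral_fintype_prod_volume_eq_pow fun x ↦ Real.exp (-(1 / 2) * x ^ 2), integral_gaussian]
  simp [mul_comm]

variable {T : Matrix ι ι ℝ} (hT : T.det ≠ 0)
include hT

theorem integrable_exp_neg_sum_sq_mulVec :
    Integrable fun x : ι → ℝ ↦ Real.exp (-(∑ i, (T *ᵥ x) i ^ 2) / 2) := by
  refine Integrable.comp_measurable (μ := volume) (f := toLin' T)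
    (g := fun y : ι → ℝ ↦ Real.exp (-(∑ i, y i ^ 2) / 2)) ?_
    (LinearMap.continuous_on_pi _).measurable
  rw [Real.map_matrix_volume_pi_eq_smul_volume_pi hT]
  exact integrable_exp_neg_sum_sq.smul_measure ENNReal.ofReal_ne_top

theorem integral_exp_neg_sum_sq_mulVec :
    ∫ x : ι → ℝ, Real.exp (-(∑ i, (T *ᵥ x) i ^ 2) / 2) =
      |T.det|⁻¹ * √(2 * Real.pi) ^ Fintype.card ι := by
  have hmeas : Measurable (toLin' T) := (LinearMap.continuous_on_pi _).measurable
  calc ∫ x : ι → ℝ, Real.exp (-(∑ i, (T *ᵥ x) i ^ 2) / 2)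
      = ∫ y, Real.exp (-(∑ i, y i ^ 2) / 2) ∂Measure.map (toLin' T) volume :=
        (integral_map (f := fun y ↦ Real.exp (-(∑ i, y i ^ 2) / 2)) hmeas.aemeasurable
          (Continuous.aestronglyMeasurable (by fun_prop))).symm
    _ = |T.det|⁻¹ * √(2 * Real.pi) ^ Fintype.card ι := by
        rw [Real.map_matrix_volume_pi_eq_smul_volume_pi hT, integral_smul_measure,
          integral_exp_neg_sum_sq, ENNReal.toReal_ofReal (abs_nonneg _), abs_inv, smul_eq_mul]

end Gaussian

open scoped MatrixOrder in
theorem exists_mul_mul_transpose_eq_one_of_posDef {M : Matrix ι ι ℝ} (hM : M.PosDef) :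
    ∃ T : Matrix ι ι ℝ, T * M * Tᵀ = 1 := by
  obtain ⟨B, hB⟩ := CStarAlgebra.nonneg_iff_eq_star_mul_self.mp hM.posSemidef.nonneg
  rw [star_eq_conjTranspose, conjTranspose_eq_transpose_of_trivial] at hB
  have hdet : IsUnit B.det := isUnit_iff_ne_zero.2 fun h ↦ hM.det_pos.ne' (by rw [hB]; simp [h])
  refine ⟨Bᵀ⁻¹, ?_⟩
  rw [hB, ← Matrix.mul_assoc, nonsing_inv_mul _ (by simpa using hdet), Matrix.one_mul,
    transpose_nonsing_inv, transpose_transpose, mul_nonsing_inv _ hdet]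

section Conditional

variable {A : Set (ι → ℝ)} (hA₀ : volume A ≠ 0) (hA₁ : volume A ≠ ∞)

section

variable (hA : ∀ j k, Integrable (fun x ↦ x j * x k) volume[|A])
include hA₀ hA₁ hA

theorem exp_neg_card_div_two_le {T : Matrix ι ι ℝ} (hT : T * secondMoment volume[|A] * Tᵀ = 1)
    (hdet : T.det ≠ 0) :
    Real.exp (-Fintype.card ι / 2) ≤
      (volume.real A)⁻¹ * (|T.det|⁻¹ * √(2 * Real.pi) ^ Fintype.card ι) := by
  have := cond_isProbabilityMeasure_of_finite hA₀ hA₁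
  have hexp := integrable_exp_neg_sum_sq_mulVec hdet
  calc Real.exp (-Fintype.card ι / 2)
      = Real.exp (∫ x, -(∑ i, (T *ᵥ x) i ^ 2) / 2 ∂volume[|A]) := by
        rw [integral_div, integral_neg, integral_sum_sq_mulVec hA, hT, trace_one]
    _ ≤ ∫ x, Real.exp (-(∑ i, (T *ᵥ x) i ^ 2) / 2) ∂volume[|A] :=
        convexOn_exp.map_integral_le Real.continuous_exp.continuousOn isClosed_univ (by simp)
          ((integrable_sum_sq_mulVec hA T).neg.div_const 2)
          (hexp.restrict.smul_measure (by simpa using hA₀))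
    _ ≤ (volume.real A)⁻¹ * ∫ x, Real.exp (-(∑ i, (T *ᵥ x) i ^ 2) / 2) := by
        rw [ProbabilityTheory.cond, integral_smul_measure, ENNReal.toReal_inv, smul_eq_mul,
          ← measureReal_def]
        exact mul_le_mul_of_nonneg_left (setIntegral_le_integral hexp
          (ae_of_all _ fun x ↦ (Real.exp_pos _).le)) (by positivity)
    _ = _ := by rw [integral_exp_neg_sum_sq_mulVec hdet]

theorem volume_mul_abs_det_le {T : Matrix ι ι ℝ} (hT : T * secondMoment volume[|A] * Tᵀ = 1) :
    volume.real A * |T.det| ≤ √(2 * Real.pi * Real.exp 1) ^ Fintype.card ι := by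
  have hdet : T.det ≠ 0 := by
    rintro h
    simpa [h] using congrArg det hT
  have hvol : 0 < volume.real A := ENNReal.toReal_pos hA₀ hA₁
  calc volume.real A * |T.det|
      = Real.exp (1 / 2) ^ Fintype.card ι *
          (Real.exp (-Fintype.card ι / 2) * (volume.real A * |T.det|)) := by
        have hcancel : Fintype.card ι * (1 / 2 : ℝ) + -Fintype.card ι / 2 = 0 := by ring
        rw [← Real.exp_nat_mul, ← mul_assoc, ← Real.exp_add, hcancel, Real.exp_zero, one_mul]
    _ ≤ Real.exp (1 / 2) ^ Fintype.card ι *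
          ((volume.real A)⁻¹ * (|T.det|⁻¹ * √(2 * Real.pi) ^ Fintype.card ι) *
            (volume.real A * |T.det|)) := by
        gcongr
        exact exp_neg_card_div_two_le hA₀ hA₁ hA hT hdet
    _ = (Real.exp (1 / 2) * √(2 * Real.pi)) ^ Fintype.card ι := by
        rw [mul_pow]
        field_simp [abs_ne_zero.2 hdet]
    _ = √(2 * Real.pi * Real.exp 1) ^ Fintype.card ι := by
        rw [Real.sqrt_mul (by positivity) (Real.exp 1), Real.exp_half, mul_comm]

-- Among densities with a given second moment matrix, the Gaussian has the largest entropy; a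
-- uniform density has entropy `log (volume A)`.
theorem volume_sq_le_det_secondMoment :
    volume.real A ^ 2 ≤
      (2 * Real.pi * Real.exp 1) ^ Fintype.card ι * (secondMoment volume[|A]).det := by
  have := cond_isProbabilityMeasure_of_finite hA₀ hA₁
  have hpos : (secondMoment volume[|A]).PosDef :=
    secondMoment_posDef hA cond_absolutelyContinuous (IsProbabilityMeasure.ne_zero _)
  obtain ⟨T, hT⟩ := exists_mul_mul_transpose_eq_one_of_posDef hpos
  have hdet : T.det ^ 2 * (secondMoment volume[|A]).det = 1 := by
    have := congrArg det hT
    simp only [det_mul, det_transpose, det_one] at this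
    linarith
  calc volume.real A ^ 2
      = (volume.real A * |T.det|) ^ 2 * (secondMoment volume[|A]).det := by
        rw [mul_pow, sq_abs, mul_assoc, hdet, mul_one]
    _ ≤ (√(2 * Real.pi * Real.exp 1) ^ Fintype.card ι) ^ 2 * (secondMoment volume[|A]).det := by
        have := hpos.det_pos.le
        gcongr
        exact volume_mul_abs_det_le hA₀ hA₁ hA hT
    _ = (2 * Real.pi * Real.exp 1) ^ Fintype.card ι * (secondMoment volume[|A]).det := by
        rw [pow_right_comm, Real.sq_sqrt (by positivity)]

end

include hA₀ in
theorem exists_mem_volume_sq_le_sq_det (hA : MeasurableSet A) (hbdd : Bornology.IsBounded A) :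
    ∃ v : ι → ι → ℝ, (∀ i, v i ∈ A) ∧
      (Fintype.card ι)! * volume.real A ^ 2 ≤
        (2 * Real.pi * Real.exp 1) ^ Fintype.card ι * (of v).det ^ 2 := by
  have hA₁ : volume A ≠ ∞ := hbdd.measure_lt_top.ne
  have := cond_isProbabilityMeasure_of_finite hA₀ hA₁
  obtain ⟨C, hC⟩ := hbdd.exists_norm_le
  have hcoord (j k) : Integrable (fun x ↦ x j * x k) volume[|A] := by
    refine .of_bound (by fun_prop) (C * C) ?_
    filter_upwards [ae_cond_mem hA] with x hx
    rw [norm_mul]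
    have hj := (norm_le_pi_norm x j).trans (hC x hx)
    exact mul_le_mul hj ((norm_le_pi_norm x k).trans (hC x hx)) (norm_nonneg _)
      ((norm_nonneg _).trans hj)
  have hmem : ∀ᵐ v ∂Measure.pi (fun _ : ι ↦ volume[|A]), ∀ i, v i ∈ A := ae_all_iff.2 fun i ↦
    (measurePreserving_eval _ i).quasiMeasurePreserving.ae (ae_cond_mem hA)
  obtain ⟨v, hv, hle⟩ := exists_notMem_null_integral_le (integrable_sq_det hcoord) hmem
  refine ⟨v, not_not.1 hv, ?_⟩
  rw [integral_sq_det hcoord] at hle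
  calc (Fintype.card ι)! * volume.real A ^ 2
      ≤ (Fintype.card ι)! * ((2 * Real.pi * Real.exp 1) ^ Fintype.card ι *
          (secondMoment volume[|A]).det) := by
        gcongr
        exact volume_sq_le_det_secondMoment hA₀ hA₁ hcoord
    _ = (2 * Real.pi * Real.exp 1) ^ Fintype.card ι *
          ((Fintype.card ι)! * (secondMoment volume[|A]).det) := by ring
    _ ≤ (2 * Real.pi * Real.exp 1) ^ Fintype.card ι * (of v).det ^ 2 := by gcongr

end Conditional

end SecondMoment

section LogConcave

/-- Log-concavity of a function with values in `[0, ∞]`. -/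
def LogConcave {E : Type*} [AddCommMonoid E] [Module ℝ E] (F : E → ℝ≥0∞) : Prop :=
  ∀ x y : E, ∀ ⦃t : ℝ⦄, t ∈ Ioo 0 1 → F x ^ (1 - t) * F y ^ t ≤ F ((1 - t) • x + t • y)

namespace LogConcave

section Module

variable {E : Type*} [AddCommMonoid E] [Module ℝ E] {F : E → ℝ≥0∞} {x y : E} {c : ℝ≥0∞}

theorem convex_superlevel (hF : LogConcave F) (c : ℝ≥0∞) : Convex ℝ {x | c ≤ F x} := by
  rw [convex_iff_forall_pos]
  intro x hx y hy a b ha hb hab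
  obtain rfl : a = 1 - b := by linarith
  have hb' : b ∈ Ioo (0 : ℝ) 1 := ⟨hb, by linarith⟩
  calc c = c ^ (1 - b) * c ^ b := (rpow_one_sub_mul_rpow hb' c).symm
    _ ≤ F x ^ (1 - b) * F y ^ b := by gcongr; exacts [hx, hy]
    _ ≤ F ((1 - b) • x + b • y) := hF x y hb'

theorem convex_pos (hF : LogConcave F) : Convex ℝ {x | 0 < F x} := by
  intro x hx y hy a b ha hb hab
  have hxy : 0 < min (F x) (F y) := lt_min hx hy
  exact hxy.trans_le <|
    hF.convex_superlevel _ (min_le_left (F x) _) (min_le_right (F x) _) ha hb hab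

theorem exists_mem_Ioo_le (hF : LogConcave F) (hx : c < F x) (hy : 0 < F y) :
    ∃ t ∈ Ioo (0 : ℝ) 1, c ≤ F ((1 - t) • x + t • y) := by
  obtain ⟨p, hcp, hpx⟩ := ENNReal.lt_iff_exists_nnreal_btwn.1 hx
  obtain ⟨q, hq, hqy⟩ := ENNReal.lt_iff_exists_nnreal_btwn.1 hy
  lift c to ℝ≥0 using hcp.ne_top
  norm_cast at hcp hq
  have hp : 0 < p := zero_le.trans_lt hcp
  have hlim : Tendsto (fun t : ℝ ↦ p ^ (1 - t) * q ^ t) (𝓝[>] 0)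
      (𝓝 (p ^ (1 - 0 : ℝ) * q ^ (0 : ℝ))) :=
    tendsto_nhdsWithin_of_tendsto_nhds <|
      (tendsto_const_nhds.nnrpow (tendsto_const_nhds.sub tendsto_id) (.inl hp.ne')).mul
        (tendsto_const_nhds.nnrpow tendsto_id (.inl hq.ne'))
  have hlt : ∀ᶠ t in 𝓝[>] (0 : ℝ), c < p ^ (1 - t) * q ^ t :=
    hlim.eventually_const_lt (by simpa using hcp)
  obtain ⟨t, hct, ht⟩ := (hlt.and (Ioo_mem_nhdsGT zero_lt_one)).exists
  refine ⟨t, ht, le_trans ?_ (hF x y ht)⟩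
  calc (c : ℝ≥0∞) ≤ ((p ^ (1 - t) * q ^ t : ℝ≥0) : ℝ≥0∞) := mod_cast hct.le
    _ = (p : ℝ≥0∞) ^ (1 - t) * (q : ℝ≥0∞) ^ t := by
      rw [ENNReal.coe_mul, ENNReal.coe_rpow_of_ne_zero hp.ne', ENNReal.coe_rpow_of_ne_zero hq.ne']
    _ ≤ F x ^ (1 - t) * F y ^ t := by gcongr <;> linarith [ht.1, ht.2]

theorem ofReal_exp_neg_mul_le_smul {L t : ℝ} (hF : LogConcave F) (ht : t ∈ Ioo 0 1)
    (h : ENNReal.ofReal (Real.exp (-L)) * F 0 ≤ F x) :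
    ENNReal.ofReal (Real.exp (-(L * t))) * F 0 ≤ F (t • x) :=
  calc ENNReal.ofReal (Real.exp (-(L * t))) * F 0
      = F 0 ^ (1 - t) * (ENNReal.ofReal (Real.exp (-L)) * F 0) ^ t := by
        rw [ENNReal.mul_rpow_of_nonneg _ _ ht.1.le, ENNReal.ofReal_rpow_of_pos (Real.exp_pos _),
          ← Real.exp_mul, mul_left_comm, rpow_one_sub_mul_rpow ht, neg_mul]
    _ ≤ F 0 ^ (1 - t) * F x ^ t := by gcongr; exact ht.1.le
    _ ≤ F (t • x) := by simpa using hF 0 x ht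

end Module

variable {E : Type*} [NormedAddCommGroup E] [NormedSpace ℝ E] [FiniteDimensional ℝ E]
  [MeasurableSpace E] [BorelSpace E] {μ : Measure E} [μ.IsAddHaarMeasure] {F : E → ℝ≥0∞}

theorem nonempty_interior_pos (hF : LogConcave F) (h₀ : ∫⁻ x, F x ∂μ ≠ 0) :
    (interior {x | 0 < F x}).Nonempty := by
  by_contra hempty
  refine h₀ (lintegral_eq_zero_of_ae_eq_zero ?_)
  have hnull : μ {x | 0 < F x} = 0 := by
    refine measure_mono_null ?_ (hF.convex_pos.addHaar_frontier μ)
    rw [frontier, not_nonempty_iff_eq_empty.1 hempty, sdiff_empty]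
    exact subset_closure
  filter_upwards [measure_eq_zero_iff_ae_notMem.1 hnull] with x hx
  simpa using hx

theorem rpow_half_mul_lintegral_rpow_half_le (hF : LogConcave F) (hm : Measurable F) (x : E) :
    F x ^ (1 / 2 : ℝ) * ∫⁻ y, F y ^ (1 / 2 : ℝ) ∂μ
      ≤ ENNReal.ofReal (2 ^ finrank ℝ E) * ∫⁻ y, F y ∂μ := by
  have hmid (y : E) : F x ^ (1 / 2 : ℝ) * F y ^ (1 / 2 : ℝ)
      ≤ F ((1 / 2 : ℝ) • x + (1 / 2 : ℝ) • y) := by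
    simpa [show (1 - 2⁻¹ : ℝ) = 2⁻¹ by norm_num] using
      hF x y (t := 1 / 2) ⟨by norm_num, by norm_num⟩
  calc F x ^ (1 / 2 : ℝ) * ∫⁻ y, F y ^ (1 / 2 : ℝ) ∂μ
      = ∫⁻ y, F x ^ (1 / 2 : ℝ) * F y ^ (1 / 2 : ℝ) ∂μ :=
        (lintegral_const_mul _ (hm.pow_const _)).symm
    _ ≤ ∫⁻ y, F ((1 / 2 : ℝ) • x + (1 / 2 : ℝ) • y) ∂μ := lintegral_mono hmid
    _ = ∫⁻ z, F ((1 / 2 : ℝ) • x + z) ∂(μ.map ((1 / 2 : ℝ) • ·)) :=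
        (lintegral_map (f := fun z ↦ F ((1 / 2 : ℝ) • x + z)) (hm.comp (measurable_const_add _))
          (measurable_const_smul _)).symm
    _ = ENNReal.ofReal (2 ^ finrank ℝ E) * ∫⁻ y, F y ∂μ := by
        rw [Measure.map_addHaar_smul _ (by norm_num), lintegral_smul_measure,
          lintegral_add_left_eq_self]
        simp

theorem iSup_ne_top (hF : LogConcave F) (hm : Measurable F) (h₀ : ∫⁻ x, F x ∂μ ≠ 0)
    (h₁ : ∫⁻ x, F x ∂μ ≠ ∞) : ⨆ x, F x ≠ ∞ := by
  set J := ∫⁻ y, F y ^ (1 / 2 : ℝ) ∂μ with hJ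
  set C := ENNReal.ofReal (2 ^ finrank ℝ E) * ∫⁻ y, F y ∂μ
  have hC : C ≠ ∞ := ENNReal.mul_ne_top ENNReal.ofReal_ne_top h₁
  have hJ₀ : J ≠ 0 := by
    contrapose! h₀
    rw [hJ, lintegral_eq_zero_iff (hm.pow_const _)] at h₀
    refine lintegral_eq_zero_of_ae_eq_zero (h₀.mono fun x hx ↦ ?_)
    exact (ENNReal.rpow_eq_zero_iff_of_pos (by norm_num)).1 hx
  refine ne_top_of_le_ne_top (ENNReal.pow_ne_top (n := 2) (ENNReal.div_ne_top hC hJ₀))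
    (iSup_le fun x ↦ ?_)
  calc F x = (F x ^ (1 / 2 : ℝ)) ^ 2 := by rw [← ENNReal.rpow_mul_natCast]; simp
    _ ≤ (C / J) ^ 2 := by
        gcongr
        exact (ENNReal.le_div_iff_mul_le (.inl hJ₀) (.inr hC)).2
          (hF.rpow_half_mul_lintegral_rpow_half_le hm x)

end LogConcave

end LogConcave

section SuperlevelSet

theorem lintegral_ofReal_exp_neg_Ioi (l : ℝ) :
    ∫⁻ r in Ioi l, ENNReal.ofReal (Real.exp (-r)) = ENNReal.ofReal (Real.exp (-l)) := by
  rw [← integral_exp_neg_Ioi, ofReal_integral_eq_lintegral_ofReal (integrableOn_exp_neg_Ioi l)]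
  exact .of_forall fun _ ↦ (Real.exp_pos _).le

open scoped Nat in
theorem lintegral_ofReal_exp_neg_mul_pow (n : ℕ) :
    ∫⁻ r in Ioi (0 : ℝ), ENNReal.ofReal (Real.exp (-r) * r ^ n) = ENNReal.ofReal (n ! : ℝ) := by
  have hint := Real.GammaIntegral_convergent (s := n + 1) (by positivity)
  simp only [add_sub_cancel_right, Real.rpow_natCast] at hint
  rw [← Real.Gamma_nat_eq_factorial, Real.Gamma_eq_integral (by positivity)]
  simp only [add_sub_cancel_right, Real.rpow_natCast]
  rw [ofReal_integral_eq_lintegral_ofReal hint]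
  filter_upwards [ae_restrict_mem measurableSet_Ioi] with r hr
  exact mul_nonneg (Real.exp_pos _).le (pow_nonneg (mem_Ioi.1 hr).le n)

theorem exists_ofReal_exp_neg_mul_eq {a b : ℝ≥0∞} (ha : a ≠ 0) (hab : a ≤ b) (hb : b ≠ ∞) :
    ∃ L : ℝ, 0 ≤ L ∧ ENNReal.ofReal (Real.exp (-L)) * b = a := by
  have ha' : a ≠ ∞ := ne_top_of_le_ne_top hb hab
  have hb' : b ≠ 0 := fun h ↦ ha (by simpa [h] using hab)
  have hdiv : a / b ≠ ∞ := ENNReal.div_ne_top ha' hb'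
  have hpos : 0 < (a / b).toReal := ENNReal.toReal_pos (ENNReal.div_ne_zero.2 ⟨ha, hb⟩) hdiv
  have hle : (a / b).toReal ≤ 1 :=
    ENNReal.toReal_le_of_le_ofReal zero_le_one (by simpa using ENNReal.div_le_of_le_mul (by simpa))
  refine ⟨-Real.log (a / b).toReal, neg_nonneg.2 (Real.log_nonpos hpos.le hle), ?_⟩
  rw [neg_neg, Real.exp_log hpos, ENNReal.ofReal_toReal hdiv, ENNReal.div_mul_cancel hb' hb]

theorem le_mul_lintegral_indicator_exp_neg {a b : ℝ≥0∞} (hab : a ≤ b) (hb : b ≠ ∞) :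
    a ≤ b * ∫⁻ r in Ioi (0 : ℝ), {r | ENNReal.ofReal (Real.exp (-r)) * b ≤ a}.indicator
      (fun r : ℝ ↦ ENNReal.ofReal (Real.exp (-r))) r := by
  rcases eq_or_ne a 0 with rfl | ha
  · exact zero_le
  obtain ⟨L, hL, hLa⟩ := exists_ofReal_exp_neg_mul_eq ha hab hb
  have hmem {r : ℝ} (hr : r ∈ Ioi L) : r ∈ {r : ℝ | ENNReal.ofReal (Real.exp (-r)) * b ≤ a} := by
    rw [mem_ofPred_eq, ← hLa]
    gcongr
    exact (mem_Ioi.1 hr).le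
  calc a = b * ∫⁻ r in Ioi L, ENNReal.ofReal (Real.exp (-r)) := by
        rw [lintegral_ofReal_exp_neg_Ioi, mul_comm, hLa]
    _ = b * ∫⁻ r in Ioi L, {r | ENNReal.ofReal (Real.exp (-r)) * b ≤ a}.indicator
          (fun r ↦ ENNReal.ofReal (Real.exp (-r))) r := by
        congr 1
        exact setLIntegral_congr_fun measurableSet_Ioi fun r hr ↦
          (indicator_of_mem (hmem hr) fun r ↦ ENNReal.ofReal (Real.exp (-r))).symm
    _ ≤ _ := by gcongr

theorem lintegral_le_mul_lintegral_exp_neg_mul_measure {α : Type*} [MeasurableSpace α]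
    {μ : Measure α} [SFinite μ] {G : α → ℝ≥0∞} {b : ℝ≥0∞} (hG : Measurable G)
    (hGb : ∀ x, G x ≤ b) (hb : b ≠ ∞) :
    ∫⁻ x, G x ∂μ ≤ b * ∫⁻ r in Ioi (0 : ℝ), ENNReal.ofReal (Real.exp (-r)) *
      μ {x | ENNReal.ofReal (Real.exp (-r)) * b ≤ G x} := by
  let K (x : α) (r : ℝ) : ℝ≥0∞ := {r | ENNReal.ofReal (Real.exp (-r)) * b ≤ G x}.indicator
    (fun r ↦ ENNReal.ofReal (Real.exp (-r))) r
  have hK : Measurable fun p : α × ℝ ↦ K p.1 p.2 :=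
    Measurable.indicator (f := fun p : α × ℝ ↦ ENNReal.ofReal (Real.exp (-p.2)))
      (s := {p : α × ℝ | ENNReal.ofReal (Real.exp (-p.2)) * b ≤ G p.1}) (by fun_prop)
      (measurableSet_le (by fun_prop) (hG.comp measurable_fst))
  have hlevel (r : ℝ) : ∫⁻ x, K x r ∂μ = ENNReal.ofReal (Real.exp (-r)) *
      μ {x | ENNReal.ofReal (Real.exp (-r)) * b ≤ G x} :=
    lintegral_indicator_const (measurableSet_le measurable_const hG) _
  calc ∫⁻ x, G x ∂μ ≤ ∫⁻ x, b * (∫⁻ r in Ioi (0 : ℝ), K x r) ∂μ :=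
        lintegral_mono fun x ↦ le_mul_lintegral_indicator_exp_neg (hGb x) hb
    _ = b * ∫⁻ r in Ioi (0 : ℝ), ∫⁻ x, K x r ∂μ := by
        rw [lintegral_const_mul _ hK.lintegral_prod_right',
          lintegral_lintegral_swap hK.aemeasurable]
    _ = _ := by simp only [hlevel]

variable {E : Type*} [NormedAddCommGroup E] [NormedSpace ℝ E] [FiniteDimensional ℝ E]
  [MeasurableSpace E] [BorelSpace E] {μ : Measure E} [μ.IsAddHaarMeasure] {G : E → ℝ≥0∞} {R : ℝ}

theorem LogConcave.measure_superlevel_le (hG : LogConcave G) {r : ℝ} (hr : 0 < r) (hR : 0 < R) :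
    μ {x | ENNReal.ofReal (Real.exp (-r)) * G 0 ≤ G x} ≤
      ENNReal.ofReal (1 + (r / R) ^ finrank ℝ E) *
        μ {x | ENNReal.ofReal (Real.exp (-R)) * G 0 ≤ G x} := by
  rcases le_or_gt r R with hrR | hrR
  · calc μ {x | ENNReal.ofReal (Real.exp (-r)) * G 0 ≤ G x}
        ≤ μ {x | ENNReal.ofReal (Real.exp (-R)) * G 0 ≤ G x} :=
          measure_mono fun x (hx : _ ≤ G x) ↦ hx.trans' (by gcongr)
      _ ≤ _ := le_mul_of_one_le_left' <| by
          rw [← ENNReal.ofReal_one]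
          exact ENNReal.ofReal_le_ofReal (le_add_of_nonneg_right (by positivity))
  · have hsub : {x | ENNReal.ofReal (Real.exp (-r)) * G 0 ≤ G x} ⊆
        ((R / r) • ·) ⁻¹' {x | ENNReal.ofReal (Real.exp (-R)) * G 0 ≤ G x} := fun x hx ↦ by
      have := hG.ofReal_exp_neg_mul_le_smul ⟨by positivity, (div_lt_one hr).2 hrR⟩ hx
      rwa [mul_div_cancel₀ _ hr.ne'] at this
    calc _ ≤ _ := measure_mono hsub
      _ = ENNReal.ofReal ((r / R) ^ finrank ℝ E) *
          μ {x | ENNReal.ofReal (Real.exp (-R)) * G 0 ≤ G x} := by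
          rw [Measure.addHaar_preimage_smul _ (by positivity), abs_of_pos (by positivity),
            ← inv_pow, inv_div]
      _ ≤ _ := by gcongr; linarith

open scoped Nat in
theorem LogConcave.lintegral_le_two_mul_measure_superlevel (hG : LogConcave G)
    (hm : Measurable G) (hG₀ : ∀ x, G x ≤ G 0) (hfin : G 0 ≠ ∞) (hR : 0 < R)
    (hRn : R ^ finrank ℝ E = (finrank ℝ E)!) :
    ∫⁻ x, G x ∂μ ≤ G 0 * (2 * μ {x | ENNReal.ofReal (Real.exp (-R)) * G 0 ≤ G x}) := by
  set n := finrank ℝ E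
  set M := {x | ENNReal.ofReal (Real.exp (-R)) * G 0 ≤ G x}
  have hdensity {r : ℝ} (hr : 0 < r) :
      ENNReal.ofReal (Real.exp (-r)) * ENNReal.ofReal (1 + (r / R) ^ n) =
        ENNReal.ofReal (Real.exp (-r)) +
          ENNReal.ofReal (n ! : ℝ)⁻¹ * ENNReal.ofReal (Real.exp (-r) * r ^ n) := by
    rw [← ENNReal.ofReal_mul (by positivity), ← ENNReal.ofReal_mul (by positivity),
      ← ENNReal.ofReal_add (by positivity) (by positivity), div_pow, hRn]
    congr 1
    ring
  calc ∫⁻ x, G x ∂μ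
      ≤ G 0 * ∫⁻ r in Ioi (0 : ℝ), ENNReal.ofReal (Real.exp (-r)) *
          μ {x | ENNReal.ofReal (Real.exp (-r)) * G 0 ≤ G x} :=
        lintegral_le_mul_lintegral_exp_neg_mul_measure hm hG₀ hfin
    _ ≤ G 0 * ∫⁻ r in Ioi (0 : ℝ), (ENNReal.ofReal (Real.exp (-r)) +
          ENNReal.ofReal (n ! : ℝ)⁻¹ * ENNReal.ofReal (Real.exp (-r) * r ^ n)) * μ M := by
        refine mul_le_mul_right (setLIntegral_mono' measurableSet_Ioi fun r hr ↦ ?_) _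
        rw [← hdensity hr, mul_assoc]
        exact mul_le_mul_right (hG.measure_superlevel_le hr hR) _
    _ = G 0 * (2 * μ M) := by
        rw [lintegral_mul_const _ (by fun_prop), lintegral_add_left (by fun_prop),
          lintegral_const_mul _ (by fun_prop), lintegral_ofReal_exp_neg_Ioi,
          lintegral_ofReal_exp_neg_mul_pow, ← ENNReal.ofReal_mul (by positivity),
          inv_mul_cancel₀ (by positivity)]
        simp [one_add_one_eq_two]

end SuperlevelSet

section Covariogram

/-- The functional covariogram `x ↦ ∫ min (F y) (F (y + x)) dy`; for `F` an indicator it is the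
volume of the intersection of a set with its translate by `-x`. -/
def covariogram {E : Type*} [Add E] [MeasurableSpace E] (μ : Measure E) (F : E → ℝ≥0∞) (x : E) :
    ℝ≥0∞ :=
  ∫⁻ y, min (F y) (F (y + x)) ∂μ

theorem covariogram_zero {E : Type*} [AddZeroClass E] [MeasurableSpace E] (μ : Measure E)
    (F : E → ℝ≥0∞) : covariogram μ F 0 = ∫⁻ y, F y ∂μ := by
  simp [covariogram]

theorem covariogram_le_zero {E : Type*} [AddZeroClass E] [MeasurableSpace E] (μ : Measure E)
    (F : E → ℝ≥0∞) (x : E) : covariogram μ F x ≤ covariogram μ F 0 := by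
  rw [covariogram_zero]
  exact lintegral_mono fun y ↦ min_le_left _ _

variable {E : Type*} [AddGroup E] [MeasurableSpace E] [MeasurableAdd₂ E] {μ : Measure E}
  {F : E → ℝ≥0∞}

theorem measurable_min_comp_add (hF : Measurable F) (x : E) :
    Measurable fun y ↦ min (F y) (F (y + x)) :=
  hF.min (hF.comp (measurable_add_const x))

theorem measurable_covariogram [SFinite μ] (hF : Measurable F) : Measurable (covariogram μ F) :=
  Measurable.lintegral_prod_right' (f := fun p : E × E ↦ min (F p.2) (F (p.2 + p.1)))
    ((hF.comp measurable_snd).min (hF.comp (measurable_snd.add measurable_fst)))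

theorem sq_lintegral_le_mul_lintegral_covariogram [SFinite μ] [μ.IsAddLeftInvariant]
    (hF : Measurable F) {S : ℝ≥0∞} (hS : ∀ x, F x ≤ S) :
    (∫⁻ x, F x ∂μ) ^ 2 ≤ S * ∫⁻ x, covariogram μ F x ∂μ := by
  have hprod : Measurable fun p : E × E ↦ F p.1 * F (p.1 + p.2) :=
    (hF.comp measurable_fst).mul (hF.comp (measurable_fst.add measurable_snd))
  have hmin (x y : E) : F y * F (y + x) ≤ S * min (F y) (F (y + x)) := by
    rw [← max_mul_min]
    exact mul_le_mul_left (max_le (hS _) (hS _)) _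
  calc (∫⁻ x, F x ∂μ) ^ 2 = ∫⁻ y, ∫⁻ x, F y * F (y + x) ∂μ ∂μ := by
        have (y : E) : ∫⁻ x, F y * F (y + x) ∂μ = F y * ∫⁻ x, F x ∂μ := by
          rw [lintegral_const_mul (F y) (f := fun x ↦ F (y + x)) (hF.comp (measurable_const_add y)),
            lintegral_add_left_eq_self]
        simp only [this, lintegral_mul_const _ hF, sq]
    _ = ∫⁻ x, ∫⁻ y, F y * F (y + x) ∂μ ∂μ := lintegral_lintegral_swap hprod.aemeasurable
    _ ≤ ∫⁻ x, S * covariogram μ F x ∂μ := lintegral_mono fun x ↦ by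
        rw [covariogram, ← lintegral_const_mul _ (measurable_min_comp_add hF x)]
        exact lintegral_mono (hmin x)
    _ = S * ∫⁻ x, covariogram μ F x ∂μ := lintegral_const_mul _ (measurable_covariogram hF)

end Covariogram

section LogConcaveCovariogram

variable {E : Type*} [NormedAddCommGroup E] [NormedSpace ℝ E] [FiniteDimensional ℝ E]
  [MeasurableSpace E] [BorelSpace E] {μ : Measure E} [μ.IsAddHaarMeasure] {F : E → ℝ≥0∞}

theorem logConcave_covariogram (hF : LogConcave F) (hm : Measurable F) :
    LogConcave (covariogram μ F) := by
  intro x z t ht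
  refine satisfiesPrekopaLeindler_of_isAddHaarMeasure μ (measurable_min_comp_add hm x)
    (measurable_min_comp_add hm z) (measurable_min_comp_add hm _) ht fun a b ↦ le_min ?_ ?_
  · calc _ ≤ F a ^ (1 - t) * F b ^ t := by
          gcongr
          exacts [sub_nonneg.2 ht.2.le, min_le_left _ _, ht.1.le, min_le_left _ _]
      _ ≤ _ := hF a b ht
  · calc _ ≤ F (a + x) ^ (1 - t) * F (b + z) ^ t := by
          gcongr
          exacts [sub_nonneg.2 ht.2.le, min_le_right _ _, ht.1.le, min_le_right _ _]
      _ ≤ F ((1 - t) • (a + x) + t • (b + z)) := hF _ _ ht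
      _ = _ := by congr 1; module

open scoped Nat in
theorem LogConcave.lintegral_le_two_mul_measure_superlevel_covariogram (hF : LogConcave F)
    (hm : Measurable F) (h₀ : ∫⁻ x, F x ∂μ ≠ 0) (h₁ : ∫⁻ x, F x ∂μ ≠ ∞) {S : ℝ≥0∞}
    (hS : ∀ x, F x ≤ S) {R : ℝ} (hR : 0 < R) (hRn : R ^ finrank ℝ E = (finrank ℝ E)!) :
    ∫⁻ x, F x ∂μ ≤ 2 * S * μ {x | ENNReal.ofReal (Real.exp (-R)) * ∫⁻ y, F y ∂μ ≤
      covariogram μ F x} := by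
  have hlevel := (logConcave_covariogram hF hm).lintegral_le_two_mul_measure_superlevel (μ := μ)
    (measurable_covariogram hm) (covariogram_le_zero μ F) (by rwa [covariogram_zero]) hR hRn
  rw [covariogram_zero] at hlevel
  rw [← ENNReal.mul_le_mul_iff_right h₀ h₁, ← sq]
  calc (∫⁻ x, F x ∂μ) ^ 2 ≤ S * ∫⁻ x, covariogram μ F x ∂μ :=
        sq_lintegral_le_mul_lintegral_covariogram hm hS
    _ ≤ S * _ := mul_le_mul_right hlevel S
    _ = _ := by ring

end LogConcaveCovariogram

section OrthogonalSlicing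

variable {E : Type*} [NormedAddCommGroup E] [InnerProductSpace ℝ E] [MeasurableSpace E]
  [BorelSpace E] {v : E}

theorem lintegral_span_singleton_eq (hv : v ≠ 0) {u : E → ℝ≥0∞} (hu : Measurable u) :
    ∫⁻ z : ℝ ∙ v, u z = ‖v‖ₑ * ∫⁻ s : ℝ, u (s • v) := by
  have hv' : ‖v‖ ≠ 0 := norm_ne_zero_iff.2 hv
  have hnorm : ‖‖v‖⁻¹ • v‖ = 1 := by simp [norm_smul, inv_mul_cancel₀ hv']
  let e : ℝ ≃ₗᵢ[ℝ] (ℝ ∙ v) := (LinearIsometryEquiv.toSpanUnitSingleton _ hnorm).trans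
    (.ofEq _ _ (Submodule.span_singleton_smul_eq (inv_ne_zero hv').isUnit v))
  have he (s : ℝ) : (e (‖v‖ • s) : E) = s • v := by
    simp [e, smul_smul, mul_right_comm _ s, mul_inv_cancel₀ hv']
  have hue : Measurable fun s ↦ u (e s) := hu.comp (by fun_prop)
  calc ∫⁻ z : ℝ ∙ v, u z = ∫⁻ r, u (e r) :=
        (e.measurePreserving.lintegral_comp (hu.comp measurable_subtype_coe)).symm
    _ = ‖v‖ₑ * ∫⁻ r, u (e r) ∂(volume.map (‖v‖ • ·)) := by
        rw [Measure.map_addHaar_smul _ hv', lintegral_smul_measure, smul_eq_mul, ← mul_assoc,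
          ← ofReal_norm, ← ENNReal.ofReal_mul (norm_nonneg v)]
        simp [mul_inv_cancel₀ hv']
    _ = ‖v‖ₑ * ∫⁻ s : ℝ, u (s • v) := by
        rw [lintegral_map hue (measurable_const_smul _)]
        simp only [he]

variable [FiniteDimensional ℝ E]

theorem lintegral_eq_enorm_mul_lintegral_orthogonal (hv : v ≠ 0) {u : E → ℝ≥0∞}
    (hu : Measurable u) :
    ∫⁻ x, u x = ‖v‖ₑ * ∫⁻ y : (ℝ ∙ v)ᗮ, ∫⁻ s : ℝ, u (y + s • v) := by
  let e := (ℝ ∙ v).orthogonalDecomposition.symm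
  have he : MeasurePreserving fun p : (ℝ ∙ v) × (ℝ ∙ v)ᗮ ↦ (p.1 + p.2 : E) :=
    e.measurePreserving.comp (WithLp.volume_preserving_toLp _ _)
  have hslice (y : (ℝ ∙ v)ᗮ) :
      ∫⁻ z : ℝ ∙ v, u (z + y) = ‖v‖ₑ * ∫⁻ s : ℝ, u (y + s • v) := by
    simpa only [add_comm _ (y : E)] using
      lintegral_span_singleton_eq hv (u := fun z ↦ u (z + y)) (hu.comp (by fun_prop))
  have hu' : Measurable fun p : (ℝ ∙ v)ᗮ × ℝ ↦ u (p.1 + p.2 • v) := hu.comp (by fun_prop)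
  calc ∫⁻ x, u x = ∫⁻ p : (ℝ ∙ v) × (ℝ ∙ v)ᗮ, u (p.1 + p.2) := (he.lintegral_comp hu).symm
    _ = ∫⁻ y : (ℝ ∙ v)ᗮ, ∫⁻ z : ℝ ∙ v, u (z + y) :=
      lintegral_prod_symm _ (hu.comp he.measurable).aemeasurable
    _ = _ := by
      simp only [hslice]
      exact lintegral_const_mul _ hu'.lintegral_prod_right'

end OrthogonalSlicing

section LineSup

theorem measurable_iSup_of_upperSemicontinuous {X Y : Type*} [TopologicalSpace X] [T2Space X]
    [SigmaCompactSpace X] [MeasurableSpace X] [OpensMeasurableSpace X] [TopologicalSpace Y]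
    [SigmaCompactSpace Y] {g : X × Y → ℝ≥0∞} (hg : UpperSemicontinuous g) :
    Measurable fun x ↦ ⨆ y, g (x, y) := by
  refine measurable_of_Ioi fun c ↦ ?_
  have hpre : (fun x ↦ ⨆ y, g (x, y)) ⁻¹' Ioi c =
      ⋃ (q : ℚ) (_ : c < Real.toNNReal q), Prod.fst '' (g ⁻¹' Ici (Real.toNNReal q : ℝ≥0∞)) := by
    ext x
    simp only [mem_preimage, mem_Ioi, lt_iSup_iff, mem_iUnion, mem_image, mem_Ici, Prod.exists,
      exists_and_right, exists_eq_right, exists_prop]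
    constructor
    · rintro ⟨y, hy⟩
      obtain ⟨q, -, hcq, hqy⟩ := ENNReal.lt_iff_exists_rat_btwn.1 hy
      exact ⟨q, hcq, y, hqy.le⟩
    · rintro ⟨q, hcq, y, hqy⟩
      exact ⟨y, hcq.trans_le hqy⟩
  rw [hpre]
  refine .iUnion fun q ↦ .iUnion fun _ ↦ ?_
  obtain ⟨K, hK, hKU⟩ := (isSigmaCompact_univ.of_isClosed_subset (hg.isClosed_preimage _)
    (subset_univ _)).image continuous_fst
  rw [← hKU]
  exact .iUnion fun i ↦ (hK i).measurableSet

/-- The supremum of `F` over the line through `x` with direction `v`. -/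
def lineSup {E : Type*} [Add E] [SMul ℝ E] (F : E → ℝ≥0∞) (v x : E) : ℝ≥0∞ :=
  ⨆ s : ℝ, F (x + s • v)

section Module

variable {E : Type*} [AddCommGroup E] [Module ℝ E]

theorem le_lineSup (F : E → ℝ≥0∞) (v x : E) : F x ≤ lineSup F v x := by
  simpa [lineSup] using le_iSup (fun s : ℝ ↦ F (x + s • v)) 0

theorem lineSup_add_smul (F : E → ℝ≥0∞) (v x : E) (s : ℝ) :
    lineSup F v (x + s • v) = lineSup F v x :=
  (Equiv.addLeft s).iSup_congr fun t ↦ by simp [add_smul, add_assoc]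

theorem lineSup_smul (F : E → ℝ≥0∞) {r : ℝ} (hr : r ≠ 0) (v x : E) :
    lineSup F (r • v) x = lineSup F v x :=
  (Equiv.mulRight₀ r hr).iSup_congr fun t ↦ by simp [smul_smul]

end Module

theorem measurable_lineSup {E : Type*} [NormedAddCommGroup E] [NormedSpace ℝ E]
    [FiniteDimensional ℝ E] [MeasurableSpace E] [BorelSpace E] {F : E → ℝ≥0∞}
    (hF : UpperSemicontinuous F) (v : E) : Measurable (lineSup F v) :=
  measurable_iSup_of_upperSemicontinuous (X := E) (Y := ℝ)
    (hF.comp (g := fun p : E × ℝ ↦ p.1 + p.2 • v) (by fun_prop))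

end LineSup

section Fibres

theorem lintegral_min_comp_add_add_ofReal_mul_le {g : ℝ → ℝ≥0∞} (hg : Measurable g) {a b t : ℝ}
    {c : ℝ≥0∞} (hc : ∀ s ∈ Icc a b, c ≤ g s) (ht : 0 ≤ t) (htb : t ≤ b - a) :
    (∫⁻ s, min (g s) (g (s + t))) + ENNReal.ofReal t * c ≤ ∫⁻ s, g s := by
  have hleft : ∫⁻ s in Iio a, min (g s) (g (s + t)) ≤ ∫⁻ s in Iio a, g s :=
    lintegral_mono fun s ↦ min_le_left _ _
  have hmid : ENNReal.ofReal t * c ≤ ∫⁻ s in Ico a (a + t), g s := by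
    calc ENNReal.ofReal t * c = ∫⁻ _ in Ico a (a + t), c := by simp [mul_comm]
      _ ≤ _ := setLIntegral_mono hg fun s hs ↦ hc s ⟨hs.1, by linarith [hs.2]⟩
  have hright : ∫⁻ s in Ici a, min (g s) (g (s + t)) ≤ ∫⁻ s in Ici (a + t), g s := by
    have hshift := (measurePreserving_add_right volume t).setLIntegral_comp_preimage
      (measurableSet_Ici (a := a + t)) hg
    rw [preimage_add_const_Ici, add_sub_cancel_right] at hshift
    exact hshift ▸ lintegral_mono fun s ↦ min_le_right _ _
  have hsplit : ∫⁻ s in Ici a, g s =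
      (∫⁻ s in Ico a (a + t), g s) + ∫⁻ s in Ici (a + t), g s := by
    rw [← lintegral_union measurableSet_Ici, Ico_union_Ici_eq_Ici (by linarith)]
    exact disjoint_left.2 fun s hs hs' ↦ hs.2.not_ge hs'
  calc (∫⁻ s, min (g s) (g (s + t))) + ENNReal.ofReal t * c
      = (∫⁻ s in Iio a, min (g s) (g (s + t))) + (∫⁻ s in Ici a, min (g s) (g (s + t)))
        + ENNReal.ofReal t * c := by
        rw [← compl_Iio, lintegral_add_compl _ measurableSet_Iio]
    _ ≤ (∫⁻ s in Iio a, g s) + (∫⁻ s in Ici (a + t), g s) + ∫⁻ s in Ico a (a + t), g s :=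
        add_le_add (add_le_add hleft hright) hmid
    _ = (∫⁻ s in Iio a, g s) + ∫⁻ s in Ici a, g s := by rw [hsplit]; ring
    _ = ∫⁻ s, g s := by rw [← compl_Iio, lintegral_add_compl _ measurableSet_Iio]

theorem ae_mem_image_interior_of_mem_image {E V : Type*} [NormedAddCommGroup E] [NormedSpace ℝ E]
    [CompleteSpace E] [NormedAddCommGroup V] [NormedSpace ℝ V] [FiniteDimensional ℝ V]
    [MeasurableSpace V] [BorelSpace V] (ν : Measure V) [ν.IsAddHaarMeasure] {D : Set E}
    (hD : Convex ℝ D) (hne : (interior D).Nonempty) {P : E →L[ℝ] V}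
    (hP : Function.Surjective P) : ∀ᵐ y ∂ν, y ∈ P '' D → y ∈ P '' interior D := by
  have hconv : Convex ℝ (P '' interior D) := hD.interior.linear_image P.toLinearMap
  filter_upwards [measure_eq_zero_iff_ae_notMem.1 (hconv.addHaar_frontier ν)] with y hy hyD
  by_contra hyint
  refine hy ⟨?_, by rwa [(P.isOpenMap hP _ isOpen_interior).interior_eq]⟩
  have hsub : D ⊆ closure (interior D) :=
    (hD.closure_interior_eq_closure_of_nonempty_interior hne).symm ▸ subset_closure
  exact image_closure_subset_closure_image P.continuous (image_mono hsub hyD)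

theorem LogConcave.exists_Icc_le {E : Type*} [AddCommGroup E] [Module ℝ E] {F : E → ℝ≥0∞}
    (hF : LogConcave F) {x v : E} {c : ℝ≥0∞} {s₀ s₁ : ℝ} (hne : s₀ ≠ s₁)
    (h₀ : 0 < F (x + s₀ • v)) (h₁ : c < F (x + s₁ • v)) :
    ∃ a b : ℝ, a < b ∧ ∀ s ∈ Icc a b, c ≤ F (x + s • v) := by
  obtain ⟨t, ht, hct⟩ := hF.exists_mem_Ioo_le h₁ h₀
  set s₂ := (1 - t) * s₁ + t * s₀ with hs₂
  have hs₁₂ : s₁ ≠ s₂ := fun h ↦ hne <| mul_left_cancel₀ ht.1.ne' (by linarith)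
  have hconv : Convex ℝ {s : ℝ | c ≤ F (x + s • v)} :=
    (hF.convex_superlevel c).affine_preimage
      (AffineMap.const ℝ ℝ x + (LinearMap.toSpanSingleton ℝ E v).toAffineMap)
  have hmem₂ : c ≤ F (x + s₂ • v) := by
    convert hct using 2
    rw [hs₂]
    module
  refine ⟨min s₁ s₂, max s₁ s₂, min_lt_max.2 hs₁₂, fun s hs ↦ ?_⟩
  exact hconv.ordConnected.uIcc_subset h₁.le hmem₂ hs

variable {E : Type*} [NormedAddCommGroup E] [InnerProductSpace ℝ E] [FiniteDimensional ℝ E]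
  [MeasurableSpace E] [BorelSpace E] {F : E → ℝ≥0∞}

-- Fibres meeting the support only in its boundary are negligible; on the others `F` is positive at
-- a second point, so that log-concavity spreads any value below the supremum over an interval.
theorem LogConcave.ae_exists_Icc_le_of_lt_lineSup (hF : LogConcave F) (h₀ : ∫⁻ x, F x ≠ 0)
    (v : E) : ∀ᵐ y : (ℝ ∙ v)ᗮ, ∀ c < lineSup F v y,
      ∃ a b : ℝ, a < b ∧ ∀ s ∈ Icc a b, c ≤ F (y + s • v) := by
  let P : E →L[ℝ] (ℝ ∙ v)ᗮ := (ℝ ∙ v)ᗮ.orthogonalProjectionOnto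
  have hPs : Function.Surjective P := fun y ↦
    ⟨y, Submodule.orthogonalProjectionOnto_mem_subspace_eq_self y⟩
  have hPv : P v = 0 := Submodule.orthogonalProjectionOnto_apply_of_mem_orthogonal <| by
    simp
  filter_upwards [ae_mem_image_interior_of_mem_image volume hF.convex_pos
    (hF.nonempty_interior_pos h₀) hPs] with y hy c hc
  obtain ⟨s₁, hs₁⟩ := lt_iSup_iff.1 hc
  obtain ⟨w, hw, hwy⟩ := hy ⟨y + s₁ • v, pos_of_gt hs₁, by simp [hPv, P]⟩
  obtain ⟨s, hs⟩ : ∃ s : ℝ, s • v = w - y := by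
    have : w - P w ∈ (ℝ ∙ v)ᗮᗮ := Submodule.sub_starProjection_mem_orthogonal w
    rwa [hwy, Submodule.orthogonal_orthogonal, Submodule.mem_span_singleton] at this
  have hopen : IsOpen ((fun r : ℝ ↦ (y : E) + r • v) ⁻¹' interior {x | 0 < F x}) :=
    isOpen_interior.preimage (by fun_prop)
  obtain ⟨s₀, hs₀, hne⟩ := (dense_compl_singleton s₁).inter_open_nonempty _ hopen
    ⟨s, by simpa [hs] using hw⟩
  exact hF.exists_Icc_le hne (interior_subset (s := {x | 0 < F x}) hs₀) hs₁

end Fibres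

section ProjSupport

theorem le_liminf_natCast_mul_lintegral_sub {g : ℝ → ℝ≥0∞} (hg : Measurable g)
    (h₁ : ∫⁻ s, g s ≠ ∞) {a b : ℝ} (hab : a < b) {c : ℝ≥0∞} (hc : ∀ s ∈ Icc a b, c ≤ g s) :
    c ≤ liminf (fun k : ℕ ↦
      k * ((∫⁻ s, g s) - ∫⁻ s, min (g s) (g (s + (k : ℝ)⁻¹)))) atTop := by
  refine le_liminf_of_le (by isBoundedDefault) ?_
  filter_upwards [eventually_ge_atTop 1,
    (tendsto_inv_atTop_nhds_zero_nat (𝕜 := ℝ)).eventually_le_const (sub_pos.2 hab)] with k hk hkb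
  have hk₀ : (0 : ℝ) < k := mod_cast hk
  have hmin : ∫⁻ s, min (g s) (g (s + (k : ℝ)⁻¹)) ≠ ∞ :=
    ne_top_of_le_ne_top h₁ (lintegral_mono fun s ↦ min_le_left _ _)
  calc c = k * (ENNReal.ofReal (k : ℝ)⁻¹ * c) := by
        rw [← mul_assoc, ← ENNReal.ofReal_natCast, ← ENNReal.ofReal_mul hk₀.le,
          mul_inv_cancel₀ hk₀.ne', ENNReal.ofReal_one, one_mul]
    _ ≤ _ := mul_le_mul_right (ENNReal.le_sub_of_add_le_left hmin
        (lintegral_min_comp_add_add_ofReal_mul_le hg hc (inv_nonneg.2 hk₀.le) hkb)) _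

variable {E : Type*} [NormedAddCommGroup E] [InnerProductSpace ℝ E] [FiniteDimensional ℝ E]
  [MeasurableSpace E] [BorelSpace E] {F : E → ℝ≥0∞} {v : E}

theorem covariogram_smul_eq_enorm_mul_lintegral_orthogonal (hF : Measurable F) (hv : v ≠ 0)
    (t : ℝ) : covariogram volume F (t • v) = ‖v‖ₑ * ∫⁻ y : (ℝ ∙ v)ᗮ,
      ∫⁻ s : ℝ, min (F (y + s • v)) (F (y + (s + t) • v)) := by
  simpa only [covariogram, add_smul, add_assoc] using
    lintegral_eq_enorm_mul_lintegral_orthogonal hv (measurable_min_comp_add hF (t • v))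

/-- The support function of the projection body of `F`: for a unit vector `v`, the integral over
`vᗮ` of the projection of `F` along `v`, extended to all vectors by positive homogeneity. -/
def projSupport (F : E → ℝ≥0∞) (v : E) : ℝ≥0∞ :=
  ‖v‖ₑ * ∫⁻ y : (ℝ ∙ v)ᗮ, lineSup F v y

theorem projSupport_smul (F : E → ℝ≥0∞) {r : ℝ} (hr : r ≠ 0) (v : E) :
    projSupport F (r • v) = ‖r‖ₑ * projSupport F v := by
  have hspan {K : Submodule ℝ E} (hK : K = ℝ ∙ v) :
      ∫⁻ y : Kᗮ, lineSup F v y = ∫⁻ y : (ℝ ∙ v)ᗮ, lineSup F v y := by subst hK; rfl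
  simp only [projSupport, lineSup_smul F hr, enorm_smul, mul_assoc,
    hspan (Submodule.span_singleton_smul_eq hr.isUnit v)]

theorem LogConcave.projSupport_le_liminf (hF : LogConcave F) (hm : Measurable F)
    (h₀ : ∫⁻ x, F x ≠ 0) (h₁ : ∫⁻ x, F x ≠ ∞) (v : E) :
    projSupport F v ≤ liminf (fun k : ℕ ↦
      k * ((∫⁻ x, F x) - covariogram volume F ((k : ℝ)⁻¹ • v))) atTop := by
  rcases eq_or_ne v 0 with rfl | hv
  · simp [projSupport]
  have hg : Measurable fun p : (ℝ ∙ v)ᗮ × ℝ ↦ F (p.1 + p.2 • v) := hm.comp (by fun_prop)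
  let I (y : (ℝ ∙ v)ᗮ) := ∫⁻ s : ℝ, F (y + s • v)
  let m (t : ℝ) (y : (ℝ ∙ v)ᗮ) := ∫⁻ s : ℝ, min (F (y + s • v)) (F (y + (s + t) • v))
  have hI : ∫⁻ x, F x = ‖v‖ₑ * ∫⁻ y, I y := lintegral_eq_enorm_mul_lintegral_orthogonal hv hm
  have hI₁ : ∫⁻ y, I y ≠ ∞ := fun h ↦ h₁ <| by
    rw [hI, h, ENNReal.mul_top (enorm_ne_zero.2 hv)]
  have hIm : Measurable I := hg.lintegral_prod_right'
  have hmm (t : ℝ) : Measurable (m t) :=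
    (hg.min (hg.comp (by fun_prop : Measurable fun p : (ℝ ∙ v)ᗮ × ℝ ↦ (p.1, p.2 + t))))
      |>.lintegral_prod_right'
  have hmI (t : ℝ) : m t ≤ I := fun y ↦ lintegral_mono fun s ↦ min_le_left _ _
  have hquot (k : ℕ) : k * ((∫⁻ x, F x) - covariogram volume F ((k : ℝ)⁻¹ • v)) =
      ‖v‖ₑ * ∫⁻ y, k * (I y - m (k : ℝ)⁻¹ y) := by
    have hsub : Measurable fun y ↦ I y - m (k : ℝ)⁻¹ y := hIm.sub (hmm _)
    rw [lintegral_const_mul _ hsub, lintegral_sub (hmm _)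
      (ne_top_of_le_ne_top hI₁ (lintegral_mono (hmI _))) (ae_of_all _ (hmI _)), hI,
      covariogram_smul_eq_enorm_mul_lintegral_orthogonal hm hv,
      ← ENNReal.mul_sub fun _ _ ↦ enorm_ne_top, mul_left_comm]
  have hlim : ∀ᵐ y : (ℝ ∙ v)ᗮ,
      lineSup F v y ≤ liminf (fun k : ℕ ↦ k * (I y - m (k : ℝ)⁻¹ y)) atTop := by
    filter_upwards [hF.ae_exists_Icc_le_of_lt_lineSup h₀ v, ae_lt_top hIm hI₁] with y hy hyI
    refine le_of_forall_lt_imp_le_of_dense fun c hc ↦ ?_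
    obtain ⟨a, b, hab, hs⟩ := hy c hc
    exact le_liminf_natCast_mul_lintegral_sub (hg.comp measurable_prodMk_left) hyI.ne hab hs
  calc projSupport F v
      ≤ ‖v‖ₑ * liminf (fun k : ℕ ↦ ∫⁻ y, k * (I y - m (k : ℝ)⁻¹ y)) atTop :=
        mul_le_mul_right ((lintegral_mono_ae hlim).trans <|
          lintegral_liminf_le fun k ↦ (hIm.sub (hmm _)).const_mul _) _
    _ = _ := by simp_rw [hquot, ENNReal.liminf_const_mul_of_ne_top enorm_ne_top]

theorem LogConcave.projSupport_le_ofReal_mul_lintegral (hF : LogConcave F) (hm : Measurable F)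
    (h₀ : ∫⁻ x, F x ≠ 0) (h₁ : ∫⁻ x, F x ≠ ∞) {L : ℝ}
    (hv : ENNReal.ofReal (Real.exp (-L)) * ∫⁻ x, F x ≤ covariogram volume F v) :
    projSupport F v ≤ ENNReal.ofReal L * ∫⁻ x, F x := by
  refine (hF.projSupport_le_liminf hm h₀ h₁ v).trans ?_
  refine liminf_le_of_frequently_le' (Eventually.frequently ?_)
  filter_upwards [eventually_ge_atTop 2] with k hk
  have hk₀ : (0 : ℝ) < k := by positivity
  have hdecay : ENNReal.ofReal (Real.exp (-(L * (k : ℝ)⁻¹))) * ∫⁻ x, F x ≤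
      covariogram volume F ((k : ℝ)⁻¹ • v) := by
    rw [← covariogram_zero volume F] at hv ⊢
    exact (logConcave_covariogram hF hm).ofReal_exp_neg_mul_le_smul
      ⟨by positivity, inv_lt_one_of_one_lt₀ (mod_cast hk)⟩ hv
  have hexp : 1 - ENNReal.ofReal (Real.exp (-(L * (k : ℝ)⁻¹))) ≤
      ENNReal.ofReal (L * (k : ℝ)⁻¹) := by
    rw [← ENNReal.ofReal_one, ← ENNReal.ofReal_sub _ (Real.exp_pos _).le]
    exact ENNReal.ofReal_le_ofReal (by linarith [Real.add_one_le_exp (-(L * (k : ℝ)⁻¹))])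
  calc k * ((∫⁻ x, F x) - covariogram volume F ((k : ℝ)⁻¹ • v))
      ≤ k * ((1 - ENNReal.ofReal (Real.exp (-(L * (k : ℝ)⁻¹)))) * ∫⁻ x, F x) := by
        rw [ENNReal.sub_mul fun _ _ ↦ h₁, one_mul]
        exact mul_le_mul_right (tsub_le_tsub_left hdecay _) _
    _ ≤ k * (ENNReal.ofReal (L * (k : ℝ)⁻¹) * ∫⁻ x, F x) := by gcongr
    _ = ENNReal.ofReal L * ∫⁻ x, F x := by
        rw [← mul_assoc, ← ENNReal.ofReal_natCast, ← ENNReal.ofReal_mul hk₀.le]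
        congr 2
        field_simp

theorem LogConcave.exists_covariogram_smul_ne_zero (hF : LogConcave F) (hm : Measurable F)
    (h₀ : ∫⁻ x, F x ≠ 0) (v : E) :
    ∃ r : ℝ, r ≠ 0 ∧ covariogram volume F (r • v) ≠ 0 := by
  set U := interior {x | 0 < F x}
  obtain ⟨x, hx⟩ := hF.nonempty_interior_pos h₀
  have hopen : IsOpen ((fun r : ℝ ↦ x + r • v) ⁻¹' U) := isOpen_interior.preimage (by fun_prop)
  obtain ⟨r, hr, hr₀⟩ := (dense_compl_singleton (0 : ℝ)).inter_open_nonempty _ hopen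
    ⟨0, by simpa using hx⟩
  have hV : IsOpen (U ∩ (· + r • v) ⁻¹' U) :=
    isOpen_interior.inter (isOpen_interior.preimage (by fun_prop))
  refine ⟨r, hr₀, fun h ↦ (hV.measure_pos volume ⟨x, hx, hr⟩).ne' ?_⟩
  rw [covariogram, lintegral_eq_zero_iff (measurable_min_comp_add hm _)] at h
  refine measure_mono_null (fun y hy ↦ ?_) (ae_iff.1 h)
  exact (lt_min (interior_subset (s := {x | 0 < F x}) hy.1)
    (interior_subset (s := {x | 0 < F x}) hy.2)).ne'

theorem LogConcave.projSupport_ne_top (hF : LogConcave F) (hm : Measurable F)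
    (h₀ : ∫⁻ x, F x ≠ 0) (h₁ : ∫⁻ x, F x ≠ ∞) (v : E) : projSupport F v ≠ ∞ := by
  obtain ⟨r, hr, hrv⟩ := hF.exists_covariogram_smul_ne_zero hm h₀ v
  obtain ⟨L, -, hLr⟩ := exists_ofReal_exp_neg_mul_eq hrv (covariogram_le_zero volume F _)
    (by rwa [covariogram_zero])
  have hle := hF.projSupport_le_ofReal_mul_lintegral hm h₀ h₁
    (by rw [← hLr, covariogram_zero])
  intro h
  rw [projSupport_smul F hr, h, ENNReal.mul_top (enorm_ne_zero.2 hr), top_le_iff] at hle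
  exact ENNReal.mul_ne_top ENNReal.ofReal_ne_top h₁ hle

end ProjSupport

section BasisCoordinates

theorem lintegral_eq_measure_parallelepiped_mul_lintegral_pi {ι E : Type*} [Fintype ι]
    [NormedAddCommGroup E] [NormedSpace ℝ E] [MeasurableSpace E] [BorelSpace E]
    (b : Basis ι ℝ E) (μ : Measure E) [SigmaFinite μ] [μ.IsAddLeftInvariant] {u : E → ℝ≥0∞}
    (hu : Measurable u) :
    ∫⁻ x, u x ∂μ = μ (parallelepiped b) * ∫⁻ a : ι → ℝ, u (b.equivFun.symm a) := by
  have : FiniteDimensional ℝ E := b.finiteDimensional_of_finite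
  let e : (ι → ℝ) ≃L[ℝ] E := b.equivFun.symm.toContinuousLinearEquiv
  have hself : b.addHaar = volume.map e := by
    classical
    have hbe : (Pi.basisFun ℝ ι).map e.toLinearEquiv = b :=
      Basis.eq_of_apply_eq fun i ↦ by simp [e, b.equivFun_symm_apply, Pi.single_apply]
    rw [← addHaarMeasure_eq_volume_pi, ← Basis.parallelepiped_basisFun, ← Basis.addHaar_def,
      Basis.map_addHaar, hbe]
  have hμ : μ = μ (parallelepiped b) • volume.map e := by
    rw [← hself, b.addHaar_def, ← b.coe_parallelepiped]
    exact Measure.addHaarMeasure_unique μ b.parallelepiped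
  calc ∫⁻ x, u x ∂μ = ∫⁻ x, u x ∂(μ (parallelepiped b) • volume.map e) := by rw [← hμ]
    _ = _ := by
      rw [lintegral_smul_measure, lintegral_map hu e.continuous.measurable]
      rfl

end BasisCoordinates

section LoomisWhitneyInBasis

theorem equivFun_symm_insertNth {E : Type*} [AddCommGroup E] [Module ℝ E] {m : ℕ}
    (b : Basis (Fin (m + 1)) ℝ E) (i : Fin (m + 1)) (s : ℝ) (y : Fin m → ℝ) :
    b.equivFun.symm (i.insertNth s y) = b.equivFun.symm (i.insertNth 0 y) + s • b i := by
  simp [b.equivFun_symm_apply, Fin.sum_univ_succAbove _ i, add_comm]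

variable {E : Type*} [NormedAddCommGroup E] [InnerProductSpace ℝ E] [FiniteDimensional ℝ E]
  [MeasurableSpace E] [BorelSpace E]

theorem setLIntegral_preimage_Ico_eq_enorm_mul_lintegral_orthogonal {Φ : E → ℝ≥0∞} {v : E}
    (hΦ : Measurable Φ) (hinv : ∀ x (s : ℝ), Φ (x + s • v) = Φ x) {l : E →ₗ[ℝ] ℝ}
    (hl : l v = 1) :
    ∫⁻ x in l ⁻¹' Ico 0 1, Φ x = ‖v‖ₑ * ∫⁻ y : (ℝ ∙ v)ᗮ, Φ y := by
  have hv : v ≠ 0 := by rintro rfl; simp at hl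
  have hS : MeasurableSet (l ⁻¹' Ico 0 1) :=
    l.continuous_of_finiteDimensional.measurable measurableSet_Ico
  rw [← lintegral_indicator hS, lintegral_eq_enorm_mul_lintegral_orthogonal hv (hΦ.indicator hS)]
  congr 1
  refine lintegral_congr fun y ↦ ?_
  calc ∫⁻ s : ℝ, (l ⁻¹' Ico 0 1).indicator Φ (y + s • v)
      = ∫⁻ s : ℝ, (Ico (0 : ℝ) 1).indicator (fun _ ↦ Φ y) (l y + s) := by
        simp only [indicator, mem_preimage, map_add, map_smul, hl, hinv, smul_eq_mul, mul_one]
    _ = Φ y := by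
        rw [lintegral_add_left_eq_self, lintegral_indicator_const measurableSet_Ico]
        simp

variable {m : ℕ} (b : Basis (Fin (m + 1)) ℝ E) (i : Fin (m + 1))

theorem volume_parallelepiped_mul_lintegral_insertNth_eq {Φ : E → ℝ≥0∞}
    (hΦ : Measurable Φ) (hinv : ∀ x (s : ℝ), Φ (x + s • b i) = Φ x) :
    volume (parallelepiped b) * ∫⁻ y : Fin m → ℝ, Φ (b.equivFun.symm (i.insertNth 0 y)) =
      ‖b i‖ₑ * ∫⁻ y : (ℝ ∙ b i)ᗮ, Φ y := by
  have hb : Continuous b.equivFun.symm :=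
    b.equivFun.symm.toLinearMap.continuous_of_finiteDimensional
  have hS : MeasurableSet (b.coord i ⁻¹' Ico 0 1) :=
    (b.coord i).continuous_of_finiteDimensional.measurable measurableSet_Ico
  have hΦS := hΦ.indicator hS
  have hsplit := lintegral_pi_eq_lintegral_insertNth volume i (hΦS.comp hb.measurable)
  rw [← setLIntegral_preimage_Ico_eq_enorm_mul_lintegral_orthogonal hΦ hinv (l := b.coord i)
    (by simp), ← lintegral_indicator hS,
    lintegral_eq_measure_parallelepiped_mul_lintegral_pi b volume hΦS]
  refine .trans ?_ (congrArg _ hsplit.symm)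
  congr 1
  calc ∫⁻ y, Φ (b.equivFun.symm (i.insertNth 0 y))
      = ∫⁻ s : ℝ, (Ico (0 : ℝ) 1).indicator
          (fun _ ↦ ∫⁻ y, Φ (b.equivFun.symm (i.insertNth 0 y))) s := by
        rw [lintegral_indicator_const measurableSet_Ico]; simp
    _ = _ := by
        refine lintegral_congr fun s ↦ ?_
        have hcoord (y : Fin m → ℝ) : b.coord i (b.equivFun.symm (i.insertNth s y)) = s := by
          rw [b.coord_apply, ← b.equivFun_apply, LinearEquiv.apply_symm_apply,
            Fin.insertNth_apply_same]
        have hΦs (y : Fin m → ℝ) : Φ (b.equivFun.symm (i.insertNth s y)) =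
            Φ (b.equivFun.symm (i.insertNth 0 y)) := by
          rw [equivFun_symm_insertNth b i s, hinv]
        by_cases hs : s ∈ Ico (0 : ℝ) 1 <;>
          simp only [Function.comp_apply, indicator, mem_preimage, hcoord, hs, if_true, if_false,
            hΦs, lintegral_zero]
        rfl

theorem lintegral_rpow_pow_mul_volume_parallelepiped_le_prod_projSupport (hm : 1 ≤ m)
    {F : E → ℝ≥0∞} (hF : UpperSemicontinuous F) :
    (∫⁻ x, F x ^ ((m + 1 : ℝ) / m)) ^ m * volume (parallelepiped b) ≤
      ∏ i, projSupport F (b i) := by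
  have hm₀ : (m : ℝ) ≠ 0 := by positivity
  let u (i : Fin (m + 1)) (y : Fin m → ℝ) := lineSup F (b i) (b.equivFun.symm (i.insertNth 0 y))
  have hu (i) : Measurable (u i) :=
    (measurable_lineSup hF (b i)).comp <|
      b.equivFun.symm.toLinearMap.continuous_of_finiteDimensional.measurable.comp <|
      (measurable_insertNth i).comp measurable_prodMk_left
  have hFu (a : Fin (m + 1) → ℝ) (i) : F (b.equivFun.symm a) ≤ u i (i.removeNth a) := by
    refine (le_lineSup F (b i) _).trans_eq ?_
    rw [← i.insertNth_self_removeNth a, equivFun_symm_insertNth, lineSup_add_smul,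
      Fin.removeNth_insertNth]
  have hprod (a : Fin (m + 1) → ℝ) : F (b.equivFun.symm a) ^ ((m + 1 : ℝ) / m) ≤
      ∏ i, u i (i.removeNth a) ^ (1 / m : ℝ) := by
    calc F (b.equivFun.symm a) ^ ((m + 1 : ℝ) / m)
        = ∏ _i : Fin (m + 1), F (b.equivFun.symm a) ^ (1 / m : ℝ) := by
          rw [Finset.prod_const, Finset.card_univ, Fintype.card_fin, ← ENNReal.rpow_mul_natCast]
          congr 1
          push_cast
          ring
      _ ≤ _ := Finset.prod_le_prod' fun i _ ↦ ENNReal.rpow_le_rpow (hFu a i) (by positivity)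
  have hroot (c : ℝ≥0∞) : (c ^ (1 / m : ℝ)) ^ m = c := by
    rw [← ENNReal.rpow_mul_natCast, one_div_mul_cancel hm₀, ENNReal.rpow_one]
  calc (∫⁻ x, F x ^ ((m + 1 : ℝ) / m)) ^ m * volume (parallelepiped b)
      ≤ (volume (parallelepiped b) * ∏ i, (∫⁻ y, u i y) ^ (1 / m : ℝ)) ^ m *
          volume (parallelepiped b) := by
        rw [lintegral_eq_measure_parallelepiped_mul_lintegral_pi b volume
          (hF.measurable.pow_const _)]
        gcongr
        exact (lintegral_mono hprod).trans (lintegral_prod_removeNth_rpow_le volume hm u hu)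
    _ = ∏ i, volume (parallelepiped b) * ∫⁻ y, u i y := by
        simp only [mul_pow, ← Finset.prod_pow, hroot, Finset.prod_mul_distrib, Finset.prod_const,
          Finset.card_univ, Fintype.card_fin]
        ring
    _ = ∏ i, projSupport F (b i) := Finset.prod_congr rfl fun i _ ↦
        volume_parallelepiped_mul_lintegral_insertNth_eq b i (measurable_lineSup hF _)
          (lineSup_add_smul F _)

end LoomisWhitneyInBasis

section BasisSelection

open scoped Nat

theorem exists_basis_mem_sq_le_sq_volume_parallelepiped {ι E : Type*} [Fintype ι]
    [NormedAddCommGroup E] [InnerProductSpace ℝ E] [FiniteDimensional ℝ E] [MeasurableSpace E]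
    [BorelSpace E] (hι : finrank ℝ E = Fintype.card ι) {A : Set E} (hA : MeasurableSet A) {r : ℝ}
    (hr : 0 < r) (hrA : ENNReal.ofReal r < volume A) :
    ∃ b : Basis ι ℝ E, (∀ i, b i ∈ A) ∧
      (Fintype.card ι)! * r ^ 2 ≤
        (2 * Real.pi * Real.exp 1) ^ Fintype.card ι * volume.real (parallelepiped b) ^ 2 := by
  classical
  obtain ⟨K, hKA, hK, hrK⟩ := hA.exists_lt_isCompact hrA
  let o : OrthonormalBasis ι ℝ E :=
    (stdOrthonormalBasis ℝ E).reindex (Fintype.equivOfCardEq (by simpa using hι))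
  let e : (ι → ℝ) ≃L[ℝ] E := o.toBasis.equivFun.symm.toContinuousLinearEquiv
  have he : MeasurePreserving e :=
    o.measurePreserving_repr_symm.comp (PiLp.volume_preserving_toLp ι)
  have hvol : volume (e ⁻¹' K) = volume K :=
    he.measure_preimage hK.measurableSet.nullMeasurableSet
  have hcompact : IsCompact (e ⁻¹' K) := e.toHomeomorph.isCompact_preimage.2 hK
  obtain ⟨v, hv, hle⟩ := exists_mem_volume_sq_le_sq_det (A := e ⁻¹' K)
    (hvol.trans_ne (zero_le.trans_lt hrK).ne') hcompact.measurableSet hcompact.isBounded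
  have hdet : o.toBasis.det (fun i ↦ e (v i)) = (Matrix.of v).det := by
    rw [← Matrix.det_transpose, Basis.det_apply]
    congr 1
    ext i j
    simp [Basis.toMatrix_apply, e, Matrix.of_apply]
  have hr_le : r ≤ volume.real (e ⁻¹' K) := by
    rw [measureReal_def, hvol]
    exact ((ENNReal.ofReal_lt_iff_lt_toReal hr.le hK.measure_lt_top.ne).1 hrK).le
  replace hle : (Fintype.card ι)! * r ^ 2 ≤ (2 * Real.pi * Real.exp 1) ^ Fintype.card ι *
      o.toBasis.det (fun i ↦ e (v i)) ^ 2 := by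
    rw [hdet]
    exact le_trans (by gcongr) hle
  have hdet₀ : o.toBasis.det (fun i ↦ e (v i)) ≠ 0 := by
    intro h
    rw [h, zero_pow two_ne_zero, mul_zero] at hle
    exact hle.not_gt (by positivity)
  obtain ⟨hli, hspan⟩ := o.toBasis.is_basis_iff_det.2 hdet₀.isUnit
  refine ⟨Basis.mk hli hspan.ge, fun i ↦ ?_, ?_⟩
  · rw [Basis.mk_apply]
    exact hKA (hv i)
  · rwa [Basis.coe_mk, measureReal_def, ← o.addHaar_eq_volume, Measure.addHaar_parallelepiped,
      ENNReal.toReal_ofReal (abs_nonneg _), sq_abs]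

theorem nine_mul_two_mul_pi_mul_exp_one_pow_le {n : ℕ} (hn : 2 ≤ n) :
    9 * (2 * Real.pi * Real.exp 1) ^ n ≤ 64 ^ n := by
  have hle : 2 * Real.pi * Real.exp 1 ≤ 64 / 3 := by
    nlinarith [Real.pi_lt_d2, Real.exp_one_lt_d9, Real.pi_pos, Real.exp_pos 1]
  calc 9 * (2 * Real.pi * Real.exp 1) ^ n ≤ 3 ^ n * (64 / 3) ^ n := by
        gcongr
        calc (9 : ℝ) = 3 ^ 2 := by norm_num
          _ ≤ 3 ^ n := by gcongr; norm_num
    _ = 64 ^ n := by rw [← mul_pow]; norm_num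

theorem factorial_mul_le_pow_mul {n : ℕ} (hn : 2 ≤ n) {I S D : ℝ} (hS : 0 < S) (hD : 0 ≤ D)
    (h : n ! * (I / (3 * S)) ^ 2 ≤ (2 * Real.pi * Real.exp 1) ^ n * D ^ 2) :
    n ! * I ≤ (8 * Real.sqrt n) ^ n * S * D := by
  refine le_of_sq_le_sq ?_ (by positivity)
  calc (n ! * I) ^ 2 = n ! * (9 * S ^ 2) * (n ! * (I / (3 * S)) ^ 2) := by field_simp; ring
    _ ≤ n ^ n * (9 * S ^ 2) * ((2 * Real.pi * Real.exp 1) ^ n * D ^ 2) := by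
        gcongr
        exact mod_cast n.factorial_le_pow
    _ = n ^ n * (9 * (2 * Real.pi * Real.exp 1) ^ n) * (S ^ 2 * D ^ 2) := by ring
    _ ≤ n ^ n * 64 ^ n * (S ^ 2 * D ^ 2) := by
        gcongr
        exact nine_mul_two_mul_pi_mul_exp_one_pow_le hn
    _ = ((8 * Real.sqrt n) ^ n * S * D) ^ 2 := by
        have hsq : (n : ℝ) * 64 = (8 * Real.sqrt n) ^ 2 := by
          rw [mul_pow, Real.sq_sqrt n.cast_nonneg]; ring
        rw [← mul_pow, hsq, pow_right_comm]
        ring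

theorem ofReal_toReal_div_lt_of_le_two_mul {I S V : ℝ≥0∞} (hI₀ : I ≠ 0) (hI₁ : I ≠ ∞)
    (hS : S ≠ ∞) (h : I ≤ 2 * S * V) : ENNReal.ofReal (I.toReal / (3 * S.toReal)) < V := by
  by_contra! hV
  have hle := ENNReal.toReal_mono (by finiteness) (h.trans (mul_le_mul_right hV _))
  have hI := ENNReal.toReal_pos hI₀ hI₁
  rw [ENNReal.toReal_mul, ENNReal.toReal_mul, ENNReal.toReal_ofNat,
    ENNReal.toReal_ofReal (by positivity)] at hle
  have hS₀ : S.toReal ≠ 0 := by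
    intro hS₀
    rw [hS₀, mul_zero, zero_mul] at hle
    exact hle.not_gt hI
  field_simp at hle
  linarith

variable {E : Type*} [NormedAddCommGroup E] [InnerProductSpace ℝ E] [FiniteDimensional ℝ E]
  [MeasurableSpace E] [BorelSpace E] {m : ℕ}

theorem LogConcave.exists_basis_prod_projSupport_le {F : E → ℝ≥0∞} (hF : LogConcave F)
    (hmeas : Measurable F) (h₀ : ∫⁻ x, F x ≠ 0) (h₁ : ∫⁻ x, F x ≠ ∞) (hm : 1 ≤ m)
    (hE : finrank ℝ E = m + 1) :
    ∃ b : Basis (Fin (m + 1)) ℝ E, ∏ i, projSupport F (b i) ≤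
      ENNReal.ofReal ((8 * Real.sqrt (m + 1 : ℕ)) ^ (m + 1)) * (⨆ x, F x) *
        (∫⁻ x, F x) ^ m * volume (parallelepiped b) := by
  obtain ⟨R, hR, hRn⟩ : ∃ R : ℝ, 0 < R ∧ R ^ (m + 1) = (m + 1)! :=
    ⟨((m + 1)! : ℝ) ^ (((m + 1 : ℕ) : ℝ)⁻¹), by positivity,
      Real.rpow_inv_natCast_pow (by positivity) m.succ_ne_zero⟩
  have hlevel := hF.lintegral_le_two_mul_measure_superlevel_covariogram hmeas h₀ h₁ (le_iSup F)
    hR (by rw [hE, hRn])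
  have hS₀ : ⨆ x, F x ≠ 0 := fun h ↦ h₀ (by simpa [h] using hlevel)
  have hS₁ := hF.iSup_ne_top hmeas h₀ h₁
  set A := {x | ENNReal.ofReal (Real.exp (-R)) * ∫⁻ y, F y ≤ covariogram volume F x}
  have hA : MeasurableSet A := measurableSet_le measurable_const (measurable_covariogram hmeas)
  have hS := ENNReal.toReal_pos hS₀ hS₁
  have hI := ENNReal.toReal_pos h₀ h₁
  have hlt : ENNReal.ofReal ((∫⁻ x, F x).toReal / (3 * (⨆ x, F x).toReal)) < volume A :=
    ofReal_toReal_div_lt_of_le_two_mul h₀ h₁ hS₁ hlevel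
  obtain ⟨b, hbA, hb⟩ := exists_basis_mem_sq_le_sq_volume_parallelepiped
    (hE.trans (Fintype.card_fin _).symm) hA (by positivity) hlt
  rw [Fintype.card_fin] at hb
  have hfac := factorial_mul_le_pow_mul (by lia) hS measureReal_nonneg hb
  have hfin : volume (parallelepiped b) ≠ ∞ := b.parallelepiped.isCompact.measure_lt_top.ne
  refine ⟨b, ?_⟩
  calc ∏ i, projSupport F (b i) ≤ ∏ _i : Fin (m + 1), ENNReal.ofReal R * ∫⁻ x, F x :=
        Finset.prod_le_prod' fun i _ ↦
          hF.projSupport_le_ofReal_mul_lintegral hmeas h₀ h₁ (hbA i)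
    _ = ENNReal.ofReal ((m + 1)! * (∫⁻ x, F x).toReal) * (∫⁻ x, F x) ^ m := by
        rw [Finset.prod_const, Finset.card_univ, Fintype.card_fin, mul_pow,
          ← ENNReal.ofReal_pow hR.le, hRn, ENNReal.ofReal_mul (by positivity),
          ENNReal.ofReal_toReal h₁]
        ring
    _ ≤ _ := by
        grw [hfac]
        rw [ENNReal.ofReal_mul (by positivity), ENNReal.ofReal_mul (by positivity),
          ENNReal.ofReal_toReal hS₁, ofReal_measureReal hfin]
        exact (mul_right_comm _ _ _).le

theorem lintegral_rpow_pow_le_of_projSupport_le {F₁ F₂ : E → ℝ≥0∞} (hF₁ : UpperSemicontinuous F₁)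
    (hF₂ : LogConcave F₂) (hmeas : Measurable F₂) (h₀ : ∫⁻ x, F₂ x ≠ 0) (h₁ : ∫⁻ x, F₂ x ≠ ∞)
    (hm : 1 ≤ m) (hE : finrank ℝ E = m + 1) (hle : ∀ v, projSupport F₁ v ≤ projSupport F₂ v) :
    (∫⁻ x, F₁ x ^ ((m + 1 : ℝ) / m)) ^ m ≤
      ENNReal.ofReal ((8 * Real.sqrt (m + 1 : ℕ)) ^ (m + 1)) * (⨆ x, F₂ x) *
        (∫⁻ x, F₂ x) ^ m := by
  obtain ⟨b, hb⟩ := hF₂.exists_basis_prod_projSupport_le hmeas h₀ h₁ hm hE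
  have hpos : volume (parallelepiped b) ≠ 0 :=
    (Measure.measure_pos_of_nonempty_interior _ b.parallelepiped.interior_nonempty).ne'
  have hfin : volume (parallelepiped b) ≠ ∞ := b.parallelepiped.isCompact.measure_lt_top.ne
  refine (ENNReal.mul_le_mul_iff_left hpos hfin).1 ?_
  calc _ ≤ ∏ i, projSupport F₁ (b i) :=
        lintegral_rpow_pow_mul_volume_parallelepiped_le_prod_projSupport b hm hF₁
    _ ≤ ∏ i, projSupport F₂ (b i) := Finset.prod_le_prod' fun i _ ↦ hle (b i)
    _ ≤ _ := hb

end BasisSelection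

section RealValued

theorem toReal_iSup_ofReal {ι : Sort*} {f : ι → ℝ} (hf : ∀ i, 0 ≤ f i) :
    (⨆ i, ENNReal.ofReal (f i)).toReal = ⨆ i, f i := by
  simp only [ENNReal.toReal_iSup fun _ ↦ ENNReal.ofReal_ne_top, ENNReal.toReal_ofReal (hf _)]

theorem upperSemicontinuous_ofReal_comp {α : Type*} [TopologicalSpace α] {f : α → ℝ}
    (hf : UpperSemicontinuous f) : UpperSemicontinuous fun x ↦ ENNReal.ofReal (f x) :=
  ENNReal.continuous_ofReal.comp_upperSemicontinuous hf ENNReal.ofReal_mono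

variable {n : ℕ} {f : Eucl n → ℝ} {θ : Eucl n}

theorem IsLogConcave.logConcave_ofReal (hf : IsLogConcave f) (h₀ : ∀ x, 0 ≤ f x) :
    LogConcave fun x ↦ ENNReal.ofReal (f x) := by
  intro x y t ht
  have h := hf x y (1 - t) (by linarith [ht.2]) (by linarith [ht.1])
  rw [sub_sub_cancel] at h
  rw [ENNReal.ofReal_rpow_of_nonneg (h₀ x) (by linarith [ht.2]),
    ENNReal.ofReal_rpow_of_nonneg (h₀ y) ht.1.le,
    ← ENNReal.ofReal_mul (Real.rpow_nonneg (h₀ x) _)]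
  exact ENNReal.ofReal_mono h

theorem iSup_orthogonal_orthogonal_span_singleton (h₀ : ∀ x, 0 ≤ f x) (y : Eucl n) :
    ⨆ z : (ℝ ∙ θ)ᗮᗮ, f (y + z) = (lineSup (fun x ↦ ENNReal.ofReal (f x)) θ y).toReal := by
  rw [lineSup, toReal_iSup_ofReal fun _ ↦ h₀ _, Submodule.orthogonal_orthogonal]
  refine (Function.Surjective.iSup_comp (f := fun s : ℝ ↦
    (⟨s • θ, Submodule.smul_mem _ s (Submodule.mem_span_singleton_self θ)⟩ : ℝ ∙ θ)) ?_ _).symm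
  rintro ⟨z, hz⟩
  obtain ⟨s, rfl⟩ := Submodule.mem_span_singleton.1 hz
  exact ⟨s, rfl⟩

theorem lineSup_ofReal_ne_top (hbdd : BddAbove (range f)) (v x : Eucl n) :
    lineSup (fun x ↦ ENNReal.ofReal (f x)) v x ≠ ∞ := by
  obtain ⟨C, hC⟩ := hbdd
  exact ne_top_of_le_ne_top ENNReal.ofReal_ne_top
    (iSup_le fun s ↦ ENNReal.ofReal_mono (hC (mem_range_self _)))

theorem projL1_orthogonal_span_singleton (h₀ : ∀ x, 0 ≤ f x) (hf : UpperSemicontinuous f)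
    (hbdd : BddAbove (range f)) (hθ : ‖θ‖ = 1) :
    projL1 f (ℝ ∙ θ)ᗮ = (projSupport (fun x ↦ ENNReal.ofReal (f x)) θ).toReal := by
  have hmeas : Measurable fun y : (ℝ ∙ θ)ᗮ ↦ lineSup (fun x ↦ ENNReal.ofReal (f x)) θ y :=
    (measurable_lineSup (upperSemicontinuous_ofReal_comp hf) θ).comp measurable_subtype_coe
  simp only [projL1, projSupport, iSup_orthogonal_orthogonal_span_singleton h₀]
  rw [integral_toReal hmeas.aemeasurable
    (.of_forall fun y ↦ (lineSup_ofReal_ne_top hbdd θ y).lt_top), ← ofReal_norm, hθ,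
    ENNReal.ofReal_one, one_mul]

theorem integrable_iSup_iff_projSupport_ne_top (h₀ : ∀ x, 0 ≤ f x) (hf : UpperSemicontinuous f)
    (hbdd : BddAbove (range f)) (hθ : ‖θ‖ = 1) :
    Integrable (fun y : (ℝ ∙ θ)ᗮ ↦ ⨆ z : (ℝ ∙ θ)ᗮᗮ, f (y + z)) ↔
      projSupport (fun x ↦ ENNReal.ofReal (f x)) θ ≠ ∞ := by
  have hmeas : Measurable fun y : (ℝ ∙ θ)ᗮ ↦ lineSup (fun x ↦ ENNReal.ofReal (f x)) θ y :=
    (measurable_lineSup (upperSemicontinuous_ofReal_comp hf) θ).comp measurable_subtype_coe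
  simp only [projSupport, iSup_orthogonal_orthogonal_span_singleton h₀]
  rw [integrable_toReal_iff hmeas.aemeasurable
    (.of_forall fun y ↦ lineSup_ofReal_ne_top hbdd θ y), ← ofReal_norm, hθ,
    ENNReal.ofReal_one, one_mul]

theorem projSupport_le_of_forall_norm_eq_one {E : Type*} [NormedAddCommGroup E]
    [InnerProductSpace ℝ E] [FiniteDimensional ℝ E] [MeasurableSpace E] [BorelSpace E]
    {F₁ F₂ : E → ℝ≥0∞} (h : ∀ θ : E, ‖θ‖ = 1 → projSupport F₁ θ ≤ projSupport F₂ θ) (v : E) :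
    projSupport F₁ v ≤ projSupport F₂ v := by
  rcases eq_or_ne v 0 with rfl | hv
  · simp [projSupport]
  have hθ := norm_smul_inv_norm (𝕜 := ℝ) hv
  have hv' : v = ‖v‖ • ((‖v‖⁻¹ : ℝ) • v) := (smul_inv_smul₀ (norm_ne_zero_iff.2 hv) v).symm
  rw [hv', projSupport_smul _ (norm_ne_zero_iff.2 hv), projSupport_smul _ (norm_ne_zero_iff.2 hv)]
  exact mul_le_mul_right (h _ hθ) _

namespace MemQ0

variable (hf : MemQ0 f)
include hf

theorem logConcave_ofReal : LogConcave fun x ↦ ENNReal.ofReal (f x) :=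
  hf.2.1.logConcave_ofReal hf.1

theorem ofReal_integral : ENNReal.ofReal (∫ x, f x) = ∫⁻ x, ENNReal.ofReal (f x) :=
  ofReal_integral_eq_lintegral_ofReal hf.2.2.2.1 (.of_forall hf.1)

theorem lintegral_ofReal_ne_zero : ∫⁻ x, ENNReal.ofReal (f x) ≠ 0 := by
  rw [← hf.ofReal_integral]
  exact (ENNReal.ofReal_pos.2 hf.2.2.2.2).ne'

theorem lintegral_ofReal_ne_top : ∫⁻ x, ENNReal.ofReal (f x) ≠ ∞ := by
  rw [← hf.ofReal_integral]
  exact ENNReal.ofReal_ne_top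

theorem measurable_ofReal : Measurable fun x ↦ ENNReal.ofReal (f x) :=
  (upperSemicontinuous_ofReal_comp hf.2.2.1).measurable

theorem bddAbove_range : BddAbove (range f) := by
  have htop := hf.logConcave_ofReal.iSup_ne_top hf.measurable_ofReal hf.lintegral_ofReal_ne_zero
    hf.lintegral_ofReal_ne_top
  exact ⟨_, forall_mem_range.2 fun x ↦
    (ENNReal.ofReal_le_iff_le_toReal htop).1 (le_iSup (fun x ↦ ENNReal.ofReal (f x)) x)⟩

theorem projSupport_ofReal_ne_top (v : Eucl n) :
    projSupport (fun x ↦ ENNReal.ofReal (f x)) v ≠ ∞ :=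
  hf.logConcave_ofReal.projSupport_ne_top hf.measurable_ofReal hf.lintegral_ofReal_ne_zero
    hf.lintegral_ofReal_ne_top v

theorem integrable_iSup (hθ : ‖θ‖ = 1) :
    Integrable fun y : (ℝ ∙ θ)ᗮ ↦ ⨆ z : (ℝ ∙ θ)ᗮᗮ, f (y + z) :=
  (integrable_iSup_iff_projSupport_ne_top hf.1 hf.2.2.1 hf.bddAbove_range hθ).2
    (hf.projSupport_ofReal_ne_top θ)

end MemQ0

theorem rpow_le_mul_rpow_of_pow_le {m : ℕ} (hm : m ≠ 0) {c w I S : ℝ} (hc : 0 ≤ c) (hw : 0 ≤ w)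
    (hI : 0 ≤ I) (hS : 0 ≤ S) (h : w ^ m ≤ c ^ (m + 1) * S * I ^ m) :
    w ^ (1 / ((m + 1 : ℝ) / m)) ≤ c * S ^ (1 / (m + 1 : ℝ)) * I ^ (m / (m + 1 : ℝ)) := by
  have hroot {a : ℝ} (ha : 0 ≤ a) : (a ^ m) ^ (1 / (m + 1 : ℝ)) = a ^ (m / (m + 1 : ℝ)) := by
    rw [← Real.rpow_natCast, ← Real.rpow_mul ha, mul_one_div]
  have hcroot : (c ^ (m + 1)) ^ (1 / (m + 1 : ℝ)) = c := by
    simpa using Real.pow_rpow_inv_natCast hc m.succ_ne_zero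
  calc w ^ (1 / ((m + 1 : ℝ) / m)) = (w ^ m) ^ (1 / (m + 1 : ℝ)) := by rw [hroot hw, one_div_div]
    _ ≤ (c ^ (m + 1) * S * I ^ m) ^ (1 / (m + 1 : ℝ)) := by gcongr
    _ = c * S ^ (1 / (m + 1 : ℝ)) * I ^ (m / (m + 1 : ℝ)) := by
      rw [Real.mul_rpow (by positivity) (by positivity), Real.mul_rpow (by positivity) hS,
        hcroot, hroot hI]

theorem integral_rpow_eq_toReal_lintegral {α : Type*} [MeasurableSpace α] {μ : Measure α}
    {f : α → ℝ} (h₀ : ∀ x, 0 ≤ f x) (hf : Measurable f) {p : ℝ} (hp : 0 ≤ p) :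
    ∫ x, f x ^ p ∂μ = (∫⁻ x, ENNReal.ofReal (f x) ^ p ∂μ).toReal := by
  rw [integral_eq_lintegral_of_nonneg_ae (.of_forall fun x ↦ Real.rpow_nonneg (h₀ x) p)
    (hf.pow_const p).aestronglyMeasurable]
  simp only [ENNReal.ofReal_rpow_of_nonneg (h₀ _) hp]

theorem projSupport_ofReal_le_of_projL1_le {f₁ f₂ : Eucl n → ℝ} (h₀ : ∀ x, 0 ≤ f₁ x)
    (hf₁ : UpperSemicontinuous f₁) (hbdd : BddAbove (range f₁))
    (hint : ∀ θ : Eucl n, ‖θ‖ = 1 →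
      Integrable fun y : (ℝ ∙ θ)ᗮ ↦ ⨆ z : (ℝ ∙ θ)ᗮᗮ, f₁ (y + z))
    (hf₂ : MemQ0 f₂)
    (hcond : ∀ θ : Eucl n, ‖θ‖ = 1 → projL1 f₁ (ℝ ∙ θ)ᗮ ≤ projL1 f₂ (ℝ ∙ θ)ᗮ) (v : Eucl n) :
    projSupport (fun x ↦ ENNReal.ofReal (f₁ x)) v ≤
      projSupport (fun x ↦ ENNReal.ofReal (f₂ x)) v := by
  refine projSupport_le_of_forall_norm_eq_one (fun θ hθ ↦ ?_) v
  have htop := (integrable_iSup_iff_projSupport_ne_top h₀ hf₁ hbdd hθ).1 (hint θ hθ)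
  rw [← ENNReal.toReal_le_toReal htop (hf₂.projSupport_ofReal_ne_top θ),
    ← projL1_orthogonal_span_singleton h₀ hf₁ hbdd hθ,
    ← projL1_orthogonal_span_singleton hf₂.1 hf₂.2.2.1 hf₂.bddAbove_range hθ]
  exact hcond θ hθ

theorem functional_shephard_codim_one_general (n : ℕ) (hn : 2 ≤ n) (f₁ f₂ : Eucl n → ℝ)
    (h₀ : ∀ x, 0 ≤ f₁ x) (hf₁ : UpperSemicontinuous f₁) (hbdd : BddAbove (range f₁))
    (hint : ∀ θ : Eucl n, ‖θ‖ = 1 →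
      Integrable fun y : (ℝ ∙ θ)ᗮ ↦ ⨆ z : (ℝ ∙ θ)ᗮᗮ, f₁ (y + z))
    (hf₂ : MemQ0 f₂)
    (hcond : ∀ θ : Eucl n, ‖θ‖ = 1 → projL1 f₁ (ℝ ∙ θ)ᗮ ≤ projL1 f₂ (ℝ ∙ θ)ᗮ) :
    lpNorm ((n : ℝ) / ((n : ℝ) - 1)) f₁ ≤
      8 * Real.sqrt n * supNorm f₂ ^ ((1 : ℝ) / n) * (∫ x, f₂ x) ^ (((n : ℝ) - 1) / n) := by
  obtain ⟨m, rfl⟩ : ∃ m, n = m + 1 := ⟨n - 1, by lia⟩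
  have hle := lintegral_rpow_pow_le_of_projSupport_le (upperSemicontinuous_ofReal_comp hf₁)
    hf₂.logConcave_ofReal hf₂.measurable_ofReal hf₂.lintegral_ofReal_ne_zero
    hf₂.lintegral_ofReal_ne_top (by lia) finrank_euclideanSpace_fin
    (projSupport_ofReal_le_of_projL1_le h₀ hf₁ hbdd hint hf₂ hcond)
  have hfin := hf₂.logConcave_ofReal.iSup_ne_top hf₂.measurable_ofReal
    hf₂.lintegral_ofReal_ne_zero hf₂.lintegral_ofReal_ne_top
  have hI₀ := hf₂.2.2.2.2.le
  rw [← hf₂.ofReal_integral] at hle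
  replace hle := ENNReal.toReal_mono (by finiteness) hle
  rw [ENNReal.toReal_mul, ENNReal.toReal_mul, ENNReal.toReal_pow, ENNReal.toReal_pow,
    ENNReal.toReal_ofReal (by positivity), ENNReal.toReal_ofReal hI₀, toReal_iSup_ofReal hf₂.1,
    ← integral_rpow_eq_toReal_lintegral h₀ hf₁.measurable (by positivity)] at hle
  have hS₀ : 0 ≤ supNorm f₂ := Real.iSup_nonneg hf₂.1
  have hw₀ : 0 ≤ ∫ x, f₁ x ^ ((m + 1 : ℝ) / m) := integral_nonneg fun x ↦ by
    exact Real.rpow_nonneg (h₀ x) _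
  simpa only [_root_.lpNorm, supNorm, Nat.cast_add, Nat.cast_one, add_sub_cancel_right] using
    rpow_le_mul_rpow_of_pow_le (by lia) (by positivity) hw₀ hI₀ hS₀ hle

end RealValued

end

/-- **Functional Shephard problem of codimension one** (Theorem 3.1).
If `f₁, f₂ ∈ Q₀ⁿ` and `‖P_{θ⊥} f₁‖_{L¹} ≤ ‖P_{θ⊥} f₂‖_{L¹}` for all unit vectors `θ`,
then `‖f₁‖_{n/(n−1)} ≤ 8·√n·‖f₂‖_∞^{1/n}·‖f₂‖₁^{(n−1)/n}`. -/
theorem functional_shephard_codim_one (n : ℕ) (hn : 2 ≤ n)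
    (f₁ f₂ : Eucl n → ℝ) (hf₁ : MemQ0 f₁) (hf₂ : MemQ0 f₂)
    (hcond : ∀ θ : Eucl n, ‖θ‖ = 1 →
      projL1 f₁ (Submodule.span ℝ {θ})ᗮ ≤ projL1 f₂ (Submodule.span ℝ {θ})ᗮ) :
    lpNorm ((n : ℝ) / ((n : ℝ) - 1)) f₁ ≤
      8 * Real.sqrt n * supNorm f₂ ^ ((1 : ℝ) / n) *
        (∫ x, f₂ x) ^ (((n : ℝ) - 1) / n) :=
  functional_shephard_codim_one_general n hn f₁ f₂ hf₁.1 hf₁.2.2.1 hf₁.bddAbove_range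
    (fun _ ↦ hf₁.integrable_iSup) hf₂ hcond
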